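/- There exist absolute constants c ∈ (0,1) and C > 0 such that for every finite abelian group G of odd order and every nonempty subset A ⊆ G with density α = |A|/|G|, one has T(A) ≥ exp(−C·α^{−1+c}). -/

import Mathlib

namespace KM
set_option linter.unusedSectionVars false
open scoped Classical
open Finset
variable {G : Type} [AddCommGroup G] [Fintype G]

noncomputable def ind (A : Finset G) (x : G) : ℝ := if x ∈ A then 1 else 0
noncomputable def cor (f g : G → ℝ) (x : G) : ℝ := ∑ y, f y * g (y + x)
noncomputable def cnv (f g : G → ℝ) (x : G) : ℝ := ∑ y, f y * g (x - y)

lemma pow_kernel {ι β : Type} [Fintype β] (D D' : Finset ι) (F H : β → ι → ℝ) (p : ℕ) :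
    ∑ u ∈ D, ∑ v ∈ D', (∑ b, F b u * H b v) ^ p
      = ∑ b : Fin p → β, (∑ u ∈ D, ∏ i, F (b i) u) * (∑ v ∈ D', ∏ i, H (b i) v) := by
  simp_rw [Fintype.sum_pow, prod_mul_distrib, sum_mul_sum]
  have h : ∀ u ∈ D, ∑ v ∈ D', ∑ b : Fin p → β, (∏ i, F (b i) u) * (∏ i, H (b i) v)
      = ∑ b : Fin p → β, ∑ v ∈ D', (∏ i, F (b i) u) * (∏ i, H (b i) v) :=
    fun u _ => sum_comm
  rw [sum_congr rfl h, sum_comm]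

lemma cor_eq (f : G → ℝ) (u v : G) : cor f f (v - u) = ∑ b, f (b + u) * f (b + v) := by
  unfold cor
  refine (Fintype.sum_equiv (Equiv.addRight u) _ _ fun b => ?_).symm
  simp only [Equiv.coe_addRight]
  congr 2; abel

lemma cor_eq' (f : G → ℝ) (u v : G) : cor f f (u - v) = ∑ b, f (b - u) * f (b - v) := by
  unfold cor
  refine (Fintype.sum_equiv (Equiv.subRight u) _ _ fun b => ?_).symm
  simp only [Equiv.subRight_apply]
  congr 2; abel

lemma cor_eq_two (f : G → ℝ) (y u v : G) :
    cor f f (v - u) = ∑ b, f (u + y - b) * f (v + y - b) := by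
  unfold cor
  refine (Fintype.sum_equiv (Equiv.subLeft (u + y)) _ _ fun b => ?_).symm
  simp only [Equiv.subLeft_apply]
  congr 2; abel

lemma cnv_eq (f : G → ℝ) (u v y : G) :
    cnv f f (v - u + y) = ∑ b, f (b - u) * f (v + y - b) := by
  unfold cnv
  refine (Fintype.sum_equiv (Equiv.subRight u) _ _ fun b => ?_).symm
  simp only [Equiv.subRight_apply]
  congr 2; abel

lemma cor_pow_nonneg (f : G → ℝ) (D : Finset G) (p : ℕ) :
    0 ≤ ∑ u ∈ D, ∑ v ∈ D, (cor f f (v - u)) ^ p := by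
  simp_rw [cor_eq]
  rw [pow_kernel D D (fun b u => f (b + u)) (fun b u => f (b + u))]
  exact sum_nonneg fun b _ => mul_self_nonneg _

lemma cnv_pow_le (f : G → ℝ) (D : Finset G) (p : ℕ) (y : G) :
    ∑ u ∈ D, ∑ v ∈ D, (cnv f f (v - u + y)) ^ p ≤ ∑ u ∈ D, ∑ v ∈ D, (cor f f (v - u)) ^ p := by
  have h1 : ∑ u ∈ D, ∑ v ∈ D, (cor f f (v - u)) ^ p
      = ∑ b : Fin p → G, (∑ u ∈ D, ∏ i, f (b i - u)) * (∑ u ∈ D, ∏ i, f (b i - u)) := by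
    rw [sum_comm]
    simp_rw [cor_eq']
    rw [pow_kernel D D (fun b u => f (b - u)) (fun b u => f (b - u))]
  have h2 : ∑ u ∈ D, ∑ v ∈ D, (cor f f (v - u)) ^ p
      = ∑ b : Fin p → G, (∑ u ∈ D, ∏ i, f (u + y - b i)) * (∑ u ∈ D, ∏ i, f (u + y - b i)) := by
    simp_rw [cor_eq_two f y]
    rw [pow_kernel D D (fun b u => f (u + y - b)) (fun b u => f (u + y - b))]
  have h3 : ∑ u ∈ D, ∑ v ∈ D, (cnv f f (v - u + y)) ^ p
      = ∑ b : Fin p → G, (∑ u ∈ D, ∏ i, f (b i - u)) * (∑ u ∈ D, ∏ i, f (u + y - b i)) := by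
    simp_rw [cnv_eq]
    rw [pow_kernel D D (fun b u => f (b - u)) (fun b u => f (u + y - b))]
  have h4 : 2 * ∑ u ∈ D, ∑ v ∈ D, (cnv f f (v - u + y)) ^ p
      ≤ ∑ u ∈ D, ∑ v ∈ D, (cor f f (v - u)) ^ p + ∑ u ∈ D, ∑ v ∈ D, (cor f f (v - u)) ^ p := by
    nth_rewrite 1 [h1]
    rw [h2, h3, mul_sum, ← sum_add_distrib]
    refine sum_le_sum fun b _ => ?_
    nlinarith [sq_nonneg ((∑ u ∈ D, ∏ i, f (b i - u)) - (∑ u ∈ D, ∏ i, f (u + y - b i)))]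
  linarith

end KM

namespace KM
set_option linter.unusedSectionVars false
open scoped Classical
open Finset
variable {G : Type} [AddCommGroup G] [Fintype G]

lemma ind_nonneg (A : Finset G) (x : G) : 0 ≤ ind A x := by unfold ind; split_ifs <;> norm_num
lemma ind_le_one (A : Finset G) (x : G) : ind A x ≤ 1 := by unfold ind; split_ifs <;> norm_num
lemma sum_ind_mul (A : Finset G) (f : G → ℝ) : ∑ x, ind A x * f x = ∑ x ∈ A, f x := by
  simp [ind, Finset.sum_ite_mem]
lemma sum_ind (A : Finset G) : ∑ x, ind A x = A.card := by
  simp [ind, Finset.sum_ite_mem]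

def Inv (B V : Finset G) (δ : ℝ) : Prop :=
  ∃ Bp : Finset G, (∀ b ∈ B, ∀ v ∈ V, b + v ∈ Bp) ∧ (Bp.card : ℝ) ≤ (1 + δ) * B.card

lemma Inv.card {B V : Finset G} {δ : ℝ} (h : Inv B V δ) (h0 : (0 : G) ∈ V) {x : G} (hx : x ∈ V) :
    ((B.filter fun b => b + x ∉ B).card : ℝ) ≤ δ * B.card := by
  obtain ⟨Bp, h1, h2⟩ := h
  have h3 : B ∪ (B.filter fun b => b + x ∉ B).image (· + x) ⊆ Bp := by
    intro y hy
    simp only [mem_union, mem_image, mem_filter] at hy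
    rcases hy with hy | ⟨b, ⟨hb, -⟩, rfl⟩
    · simpa using h1 y hy 0 h0
    · exact h1 b hb x hx
  have h4 : Disjoint B ((B.filter fun b => b + x ∉ B).image (· + x)) := by
    rw [Finset.disjoint_right]
    intro y hy
    simp only [mem_image, mem_filter] at hy
    obtain ⟨b, ⟨_, hb⟩, rfl⟩ := hy
    exact hb
  have h5 := card_le_card h3
  rw [card_union_of_disjoint h4, card_image_of_injective _ (add_left_injective x)] at h5
  have h6 : (B.card : ℝ) + ((B.filter fun b => b + x ∉ B).card : ℝ) ≤ Bp.card := by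
    exact_mod_cast h5
  linarith

lemma cor_ind (A B : Finset G) (x : G) : cor (ind A) (ind B) x = ∑ a ∈ A, ind B (a + x) := by
  unfold cor; rw [sum_ind_mul]

lemma cor_bound {A B V : Finset G} {δ : ℝ} (hA : A ⊆ B) (h : Inv B V δ) (h0 : (0 : G) ∈ V)
    {x : G} (hx : x ∈ V) :
    (A.card : ℝ) - δ * B.card ≤ cor (ind A) (ind B) x ∧ cor (ind A) (ind B) x ≤ A.card := by
  rw [cor_ind]
  constructor
  · have h1 : (A.card : ℝ) - ∑ a ∈ A, ind B (a + x) = ((A.filter fun b => b + x ∉ B).card : ℝ) := by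
      rw [card_eq_sum_ones, card_filter]
      push_cast
      rw [← sum_sub_distrib]
      refine sum_congr rfl fun a _ => ?_
      by_cases h : a + x ∈ B <;> simp [ind, h]
    have h2 : ((A.filter fun b => b + x ∉ B).card : ℝ) ≤ ((B.filter fun b => b + x ∉ B).card : ℝ) := by
      exact_mod_cast card_le_card (filter_subset_filter _ hA)
    have := h.card h0 hx
    linarith
  · calc ∑ a ∈ A, ind B (a + x) ≤ ∑ a ∈ A, (1 : ℝ) := sum_le_sum fun a _ => ind_le_one _ _
      _ = A.card := by simp

lemma cor_swap (f g : G → ℝ) (x : G) : cor f g x = cor g f (-x) := by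
  unfold cor
  refine Fintype.sum_equiv (Equiv.addRight x) _ _ fun b => ?_
  simp [mul_comm]

lemma cnv_symm (f : G → ℝ) (B : Finset G) (hB : ∀ x, x ∈ B → -x ∈ B) (x : G) :
    cnv f (ind B) x = cor f (ind B) (-x) := by
  unfold cnv cor
  refine sum_congr rfl fun y _ => ?_
  have : (x - y ∈ B) ↔ (y + -x ∈ B) := by
    constructor
    · intro h; have := hB _ h; convert this using 1; abel
    · intro h; have := hB _ h; convert this using 1; abel
  simp [ind, this]

lemma cnv_comm (f g : G → ℝ) (x : G) : cnv f g x = cnv g f x := by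
  unfold cnv
  refine Fintype.sum_equiv (Equiv.subLeft x) _ _ fun b => ?_
  simp [mul_comm]

lemma cor_expand (f g : G → ℝ) (α : ℝ) (x : G) :
    cor (fun z => f z - α * g z) (fun z => f z - α * g z) x
      = cor f f x - α * cor f g x - α * cor g f x + α ^ 2 * cor g g x := by
  unfold cor
  simp_rw [mul_sum]
  rw [← sum_sub_distrib, ← sum_sub_distrib, ← sum_add_distrib]
  refine sum_congr rfl fun y _ => ?_
  ring

lemma cnv_expand (f g : G → ℝ) (α : ℝ) (x : G) :
    cnv (fun z => f z - α * g z) (fun z => f z - α * g z) x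
      = cnv f f x - α * cnv f g x - α * cnv g f x + α ^ 2 * cnv g g x := by
  unfold cnv
  simp_rw [mul_sum]
  rw [← sum_sub_distrib, ← sum_sub_distrib, ← sum_add_distrib]
  refine sum_congr rfl fun y _ => ?_
  ring

lemma cor_bal {A B V : Finset G} {δ α : ℝ} (hA : A ⊆ B) (h : Inv B V δ) (h0 : (0 : G) ∈ V)
    (hα : (A.card : ℝ) = α * B.card) (ha0 : 0 ≤ α) (ha1 : α ≤ 1) (hδ : 0 ≤ δ)
    {x : G} (hx : x ∈ V) (hx' : -x ∈ V) :
    |cor (fun z => ind A z - α * ind B z) (fun z => ind A z - α * ind B z) x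
      - (cor (ind A) (ind A) x - α ^ 2 * B.card)| ≤ 2 * α * δ * B.card := by
  rw [cor_expand, cor_swap (ind B) (ind A)]
  obtain ⟨h1, h2⟩ := cor_bound hA h h0 hx
  obtain ⟨h3, h4⟩ := cor_bound hA h h0 hx'
  obtain ⟨h5, h6⟩ := cor_bound subset_rfl h h0 hx
  rw [hα] at h1 h2 h3 h4
  have hB : (0 : ℝ) ≤ B.card := by positivity
  have e1 := mul_le_mul_of_nonneg_left h1 ha0
  have e2 := mul_le_mul_of_nonneg_left h2 ha0
  have e3 := mul_le_mul_of_nonneg_left h3 ha0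
  have e4 := mul_le_mul_of_nonneg_left h4 ha0
  have e5 := mul_le_mul_of_nonneg_left h5 (sq_nonneg α)
  have e6 := mul_le_mul_of_nonneg_left h6 (sq_nonneg α)
  have e7 : α ^ 2 * (δ * B.card) ≤ α * (δ * B.card) :=
    mul_le_mul_of_nonneg_right (by nlinarith) (by positivity)
  have e8 : 0 ≤ α * (δ * B.card) := by positivity
  rw [abs_le]; constructor <;> nlinarith

lemma cnv_bal {A B V : Finset G} {δ α : ℝ} (hA : A ⊆ B) (h : Inv B V δ) (h0 : (0 : G) ∈ V)
    (hBs : ∀ x, x ∈ B → -x ∈ B)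
    (hα : (A.card : ℝ) = α * B.card) (ha0 : 0 ≤ α) (ha1 : α ≤ 1) (hδ : 0 ≤ δ)
    {x : G} (hx' : -x ∈ V) :
    |cnv (fun z => ind A z - α * ind B z) (fun z => ind A z - α * ind B z) x
      - (cnv (ind A) (ind A) x - α ^ 2 * B.card)| ≤ 2 * α * δ * B.card := by
  rw [cnv_expand, cnv_comm (ind B) (ind A), cnv_symm _ _ hBs, cnv_symm _ _ hBs]
  obtain ⟨h3, h4⟩ := cor_bound hA h h0 hx'
  obtain ⟨h5, h6⟩ := cor_bound subset_rfl h h0 hx'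
  rw [hα] at h3 h4
  have hB : (0 : ℝ) ≤ B.card := by positivity
  have e3 := mul_le_mul_of_nonneg_left h3 ha0
  have e4 := mul_le_mul_of_nonneg_left h4 ha0
  have e5 := mul_le_mul_of_nonneg_left h5 (sq_nonneg α)
  have e6 := mul_le_mul_of_nonneg_left h6 (sq_nonneg α)
  have e7 : α ^ 2 * (δ * B.card) ≤ α * (δ * B.card) :=
    mul_le_mul_of_nonneg_right (by nlinarith) (by positivity)
  have e8 : 0 ≤ α * (δ * B.card) := by positivity
  rw [abs_le]; constructor <;> nlinarith

noncomputable def bohr (Γ : Finset (AddChar G ℂ)) (r : ℝ) : Finset G :=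
  univ.filter fun x => ∀ γ ∈ Γ, ‖γ x - 1‖ ≤ r

lemma mem_bohr {Γ : Finset (AddChar G ℂ)} {r : ℝ} {x : G} :
    x ∈ bohr Γ r ↔ ∀ γ ∈ Γ, ‖γ x - 1‖ ≤ r := by simp [bohr]

lemma zero_mem_bohr (Γ : Finset (AddChar G ℂ)) {r : ℝ} (hr : 0 ≤ r) : (0 : G) ∈ bohr Γ r := by
  simp [mem_bohr, hr]

lemma char_neg_sub_one (γ : AddChar G ℂ) (x : G) : ‖γ (-x) - 1‖ = ‖γ x - 1‖ := by
  have h : γ (-x) - 1 = - (γ (-x) * (γ x - 1)) := by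
    rw [mul_sub, ← AddChar.map_add_eq_mul]; simp
  rw [h, norm_neg, norm_mul, AddChar.norm_apply, one_mul]

lemma char_add_sub_one (γ : AddChar G ℂ) (x y : G) :
    ‖γ (x + y) - 1‖ ≤ ‖γ x - 1‖ + ‖γ y - 1‖ := by
  have h : γ (x + y) - 1 = γ x * (γ y - 1) + (γ x - 1) := by
    rw [AddChar.map_add_eq_mul]; ring
  rw [h]
  refine (norm_add_le _ _).trans ?_
  rw [norm_mul, AddChar.norm_apply, one_mul]; linarith

lemma neg_mem_bohr {Γ : Finset (AddChar G ℂ)} {r : ℝ} {x : G} (h : x ∈ bohr Γ r) :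
    -x ∈ bohr Γ r := by
  rw [mem_bohr] at *
  intro γ hγ; rw [char_neg_sub_one]; exact h γ hγ

lemma add_mem_bohr {Γ : Finset (AddChar G ℂ)} {r s : ℝ} {x y : G} (h : x ∈ bohr Γ r)
    (h' : y ∈ bohr Γ s) : x + y ∈ bohr Γ (r + s) := by
  rw [mem_bohr] at *
  intro γ hγ
  exact (char_add_sub_one γ x y).trans (add_le_add (h γ hγ) (h' γ hγ))

lemma bohr_mono {Γ : Finset (AddChar G ℂ)} {r s : ℝ} (h : r ≤ s) : bohr Γ r ⊆ bohr Γ s := by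
  intro x hx; rw [mem_bohr] at *
  exact fun γ hγ => (hx γ hγ).trans h

/-- Hereditary density: every weight supported on the Bohr set has a translate on which
`A` has density at least `a`. -/
def HD (A : Finset G) (Γ : Finset (AddChar G ℂ)) (s : ℕ) (a : ℝ) : Prop :=
  ∀ w : G → ℝ, (∀ z, 0 ≤ w z) → (∀ z, w z ≠ 0 → z ∈ bohr Γ ((1/2) ^ s)) →
    ∃ x, a * ∑ z, w z ≤ ∑ z, w z * ind A (x + z)

lemma HD.mono {A : Finset G} {Γ Γ' : Finset (AddChar G ℂ)} {s s' : ℕ} {a : ℝ} (h : HD A Γ s a)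
    (hΓ : Γ ⊆ Γ') (hs : s ≤ s') : HD A Γ' s' a := by
  intro w hw hw'
  refine h w hw fun z hz => ?_
  have := hw' z hz
  rw [mem_bohr] at *
  exact fun γ hγ => (this γ (hΓ hγ)).trans
    (pow_le_pow_of_le_one (by norm_num) (by norm_num) hs)

lemma HD_of_inv {A B : Finset G} {Γ : Finset (AddChar G ℂ)} {s : ℕ} {a δ : ℝ} (hB : B.Nonempty)
    (h : Inv B (bohr Γ ((1/2) ^ s)) δ) (x : G) (hx : a * B.card ≤ ∑ b ∈ B, ind A (x + b)) :
    HD A Γ s (a - δ) := by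
  intro w hw hw'
  have key : ∀ z, w z ≠ 0 → (a - δ) * B.card ≤ ∑ b ∈ B, ind A (x + b + z) := by
    intro z hz
    have hz1 := neg_mem_bohr (hw' z hz)
    have h1 := h.card (zero_mem_bohr Γ (by positivity)) hz1
    have h2 : ∑ b ∈ B, ind A (x + b) ≤ ∑ b ∈ B, ind A (x + b + z)
        + ((B.filter fun b => b + -z ∉ B).card : ℝ) := by
      have e1 : ∑ b ∈ B, ind A (x + b) = ∑ b ∈ B.filter (fun b => b + -z ∈ B), ind A (x + b)
        + ∑ b ∈ B.filter (fun b => b + -z ∉ B), ind A (x + b) :=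
        (sum_filter_add_sum_filter_not _ _ _).symm
      rw [e1]
      refine add_le_add ?_ ?_
      · have : ∑ b ∈ B.filter (fun b => b + -z ∈ B), ind A (x + b)
            = ∑ b ∈ (B.filter (fun b => b + -z ∈ B)).image (· + -z), ind A (x + b + z) := by
          rw [sum_image (fun a _ b _ h => add_left_injective (-z) h)]
          refine sum_congr rfl fun b _ => ?_
          congr 1; abel
        rw [this]
        refine sum_le_sum_of_subset_of_nonneg ?_ fun _ _ _ => ind_nonneg _ _
        intro y hy
        simp only [mem_image, mem_filter] at hy
        obtain ⟨b, ⟨_, hb⟩, rfl⟩ := hy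
        exact hb
      · calc _ ≤ ∑ b ∈ B.filter (fun b => b + -z ∉ B), (1 : ℝ) :=
              sum_le_sum fun _ _ => ind_le_one _ _
          _ = _ := by simp
    linarith
  have h3 : ∑ b ∈ B, (a - δ) * ∑ z, w z ≤ ∑ b ∈ B, ∑ z, w z * ind A (x + b + z) := by
    rw [sum_comm, sum_const, nsmul_eq_mul, mul_sum, mul_sum]
    refine sum_le_sum fun z _ => ?_
    rw [← mul_sum]
    by_cases hz : w z = 0
    · simp [hz]
    · have := mul_le_mul_of_nonneg_left (key z hz) (hw z)
      linarith
  obtain ⟨b, _, hb⟩ := exists_le_of_sum_le hB h3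
  exact ⟨x + b, hb⟩

end KM

namespace KM
set_option linter.unusedSectionVars false
open scoped Classical
open Finset
variable {G : Type} [AddCommGroup G] [Fintype G]

lemma char_sub_sub_one (γ : AddChar G ℂ) (x y : G) : ‖γ (x - y) - 1‖ = ‖γ x - γ y‖ := by
  have h : γ x - γ y = γ y * (γ (x - y) - 1) := by
    rw [mul_sub, ← AddChar.map_add_eq_mul]; simp
  rw [h, norm_mul, AddChar.norm_apply, one_mul]

lemma floor_close {k a b : ℝ} (hk : 0 < k) (h : ⌊k * a⌋ = ⌊k * b⌋) : |a - b| ≤ 1 / k := by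
  have := Int.abs_sub_lt_one_of_floor_eq_floor h
  rw [← mul_sub, abs_mul, abs_of_pos hk] at this
  rw [le_div_iff₀ hk]; linarith

lemma floor_mem {k : ℕ} {a : ℝ} (h : |a| ≤ 1) : ⌊(k : ℝ) * a⌋ ∈ Finset.Icc (-(k : ℤ)) k := by
  rw [abs_le] at h
  have hk : (0 : ℝ) ≤ k := by positivity
  rw [Finset.mem_Icc]
  constructor
  · rw [Int.le_floor]; push_cast; nlinarith
  · have h1 : ((⌊(k : ℝ) * a⌋ : ℤ) : ℝ) ≤ k := (Int.floor_le _).trans (by nlinarith)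
    exact_mod_cast h1

lemma bohr_card (Γ : Finset (AddChar G ℂ)) (d s : ℕ) (hd : Γ.card ≤ d) :
    Fintype.card G ≤ 4 ^ (d * (s + 3)) * (bohr Γ ((1/2 : ℝ) ^ s)).card := by
  set k : ℕ := 2 ^ (s + 1) with hk
  have hkpos : (0 : ℝ) < k := by positivity
  let cell : Finset (ℤ × ℤ) := Finset.Icc (-(k : ℤ)) k ×ˢ Finset.Icc (-(k : ℤ)) k
  let φ : G → (Γ → ℤ × ℤ) := fun x γ => (⌊(k : ℝ) * (γ.1 x).re⌋, ⌊(k : ℝ) * (γ.1 x).im⌋)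
  have h1 : ∀ x ∈ (univ : Finset G), φ x ∈ Fintype.piFinset (fun _ : Γ => cell) := by
    intro x _
    rw [Fintype.mem_piFinset]
    intro γ
    have hn : ‖γ.1 x‖ = 1 := AddChar.norm_apply _ _
    simp only [cell, φ, mem_product]
    exact ⟨floor_mem ((Complex.abs_re_le_norm _).trans hn.le),
      floor_mem ((Complex.abs_im_le_norm _).trans hn.le)⟩
  have h2 : ∀ b ∈ Fintype.piFinset (fun _ : Γ => cell),
      ((univ : Finset G).filter fun x => φ x = b).card ≤ (bohr Γ ((1/2 : ℝ) ^ s)).card := by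
    intro b _
    rcases ((univ : Finset G).filter fun x => φ x = b).eq_empty_or_nonempty with h | ⟨x0, hx0⟩
    · simp [h]
    · refine card_le_card_of_injOn (fun x => x - x0) ?_ (fun a _ b _ h => sub_left_injective h)
      intro x hx
      simp only [coe_filter, mem_univ, true_and, Set.mem_ofPred_eq, mem_filter] at hx hx0
      simp only [mem_coe, mem_bohr]
      intro γ hγ
      have hxx : φ x ⟨γ, hγ⟩ = φ x0 ⟨γ, hγ⟩ := by rw [hx, hx0]
      simp only [φ, Prod.mk.injEq] at hxx
      rw [char_sub_sub_one]
      have e1 := floor_close hkpos hxx.1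
      have e2 := floor_close hkpos hxx.2
      refine (Complex.norm_le_abs_re_add_abs_im _).trans ?_
      rw [Complex.sub_re, Complex.sub_im]
      have : (1 : ℝ) / k + 1 / k = (1/2) ^ s := by
        rw [hk]; push_cast; rw [pow_succ, one_div_pow]; field_simp; norm_num
      linarith
  have h3 := card_le_mul_card_image_of_maps_to h1 _ h2
  rw [card_univ, Fintype.card_piFinset] at h3
  have h4 : cell.card ≤ 4 ^ (s + 3) := by
    simp only [cell, card_product, Int.card_Icc]
    have e : ((k : ℤ) + 1 - -(k : ℤ)).toNat = 2 * k + 1 := by omega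
    rw [e]
    have e2 : 2 * k + 1 ≤ 2 ^ (s + 3) := by
      have : 1 ≤ 2 ^ s := Nat.one_le_two_pow
      rw [hk]; simp only [pow_succ]; omega
    calc (2 * k + 1) * (2 * k + 1) ≤ 2 ^ (s + 3) * 2 ^ (s + 3) := Nat.mul_le_mul e2 e2
      _ = 4 ^ (s + 3) := by rw [← mul_pow]; norm_num
  have h5 : ∏ _i : Γ, cell.card ≤ 4 ^ (d * (s + 3)) := by
    rw [prod_const, card_univ, Fintype.card_coe]
    calc cell.card ^ Γ.card ≤ (4 ^ (s + 3)) ^ Γ.card := Nat.pow_le_pow_left h4 _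
      _ ≤ (4 ^ (s + 3)) ^ d := Nat.pow_le_pow_right (by positivity) hd
      _ = _ := by rw [← pow_mul, mul_comm]
  calc Fintype.card G ≤ _ := h3
    _ ≤ _ := by rw [mul_comm]; exact Nat.mul_le_mul_right _ h5

lemma one_add_half_pow (e j : ℕ) : (2 : ℝ) ^ j ≤ (1 + (1/2 : ℝ) ^ e) ^ (2 ^ e * j) := by
  rw [pow_mul]
  refine pow_le_pow_left₀ (by norm_num) ?_ _
  have := one_add_mul_le_pow (a := (1/2 : ℝ) ^ e) (by have : (0:ℝ) < (1/2) ^ e := by positivity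
                                                      linarith) (2 ^ e)
  have h2 : ((2 ^ e : ℕ) : ℝ) * (1/2) ^ e = 1 := by push_cast; rw [← mul_pow]; norm_num
  linarith

lemma bohr_reg (Γ : Finset (AddChar G ℂ)) (d s e q : ℕ) (hd : Γ.card ≤ d) (hdq : d ≤ 2 ^ q)
    (hsq : s + 4 ≤ 2 ^ q) :
    ∃ r : ℝ, (1/2) ^ (s + 1) ≤ r ∧ r ≤ (1/2) ^ s ∧
      Inv (bohr Γ r) (bohr Γ ((1/2) ^ (s + 2 * q + e + 2))) ((1/2) ^ e) := by
  set κ : ℝ := (1/2) ^ (s + 2 * q + e + 2) with hκ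
  set m : ℕ := 2 ^ e * 2 ^ (2 * q + 1) with hm
  have hmpos : 0 < m := by positivity
  have hκpos : 0 < κ := by positivity
  by_contra hcon
  push Not at hcon
  let b : ℕ → ℝ := fun i => ((bohr Γ ((1/2) ^ (s + 1) + i * κ)).card : ℝ)
  have hmκ : (m : ℝ) * κ = (1/2) ^ (s + 1) := by
    rw [hm, hκ]; push_cast
    rw [show s + 2 * q + e + 2 = (s + 1) + (e + (2 * q + 1)) by ring, pow_add _ (s+1), ← pow_add]
    rw [mul_left_comm, ← mul_pow]; norm_num
  have hstep : ∀ i < m, (1 + (1/2 : ℝ) ^ e) * b i < b (i + 1) := by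
    intro i hi
    by_contra hle
    push Not at hle
    refine hcon ((1/2) ^ (s + 1) + i * κ) (by simp only [le_add_iff_nonneg_right]; positivity) ?_ ?_
    · have : (i : ℝ) * κ ≤ m * κ := by
        have : (i : ℝ) ≤ m := by exact_mod_cast hi.le
        gcongr
      rw [hmκ] at this
      have e : (1/2 : ℝ) ^ s = (1/2) ^ (s + 1) + (1/2) ^ (s + 1) := by rw [pow_succ]; ring
      linarith
    · refine ⟨bohr Γ ((1/2) ^ (s + 1) + (i + 1 : ℕ) * κ), fun x hx v hv => ?_, hle⟩
      have := add_mem_bohr hx hv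
      convert this using 2; push_cast; ring
  have hgrow : ∀ i ≤ m, (1 + (1/2 : ℝ) ^ e) ^ i * b 0 ≤ b i := by
    intro i
    induction i with
    | zero => intro _; simp
    | succ i ih =>
      intro hi
      have h1 := ih (by omega)
      have h2 := hstep i (by omega)
      rw [pow_succ']
      have : (0 : ℝ) ≤ 1 + (1/2) ^ e := by positivity
      nlinarith [mul_le_mul_of_nonneg_left h1 this]
  have hN : b m ≤ Fintype.card G := by
    simp only [b]; exact_mod_cast card_le_univ _
  have h0 : (Fintype.card G : ℝ) ≤ 4 ^ (d * (s + 1 + 3)) * b 0 := by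
    have := bohr_card Γ d (s + 1) hd
    simp only [b, Nat.cast_zero, zero_mul, add_zero]
    exact_mod_cast this
  have hb0 : 0 < b 0 := by
    simp only [b]
    have : (0 : G) ∈ bohr Γ ((1/2) ^ (s + 1) + ((0 : ℕ) : ℝ) * κ) :=
      zero_mem_bohr _ (by positivity)
    exact_mod_cast card_pos.mpr ⟨_, this⟩
  have h4 : (4 : ℝ) ^ (d * (s + 1 + 3)) ≤ 2 ^ (2 ^ (2 * q + 1)) := by
    rw [show (4 : ℝ) = 2 ^ 2 by norm_num, ← pow_mul]
    refine pow_le_pow_right₀ (by norm_num) ?_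
    have : d * (s + 4) ≤ 2 ^ q * 2 ^ q := Nat.mul_le_mul hdq hsq
    rw [pow_succ, two_mul q, pow_add]
    rw [show s + 1 + 3 = s + 4 by ring]
    omega
  have h5 := one_add_half_pow e (2 ^ (2 * q + 1))
  obtain ⟨m', hm'⟩ : ∃ m', m = m' + 1 := ⟨m - 1, by omega⟩
  have h6 := hstep m' (by omega)
  have h7 := hgrow m' (by omega)
  rw [← hm'] at h6
  have h8 : (1 + (1/2 : ℝ) ^ e) ^ m * b 0 < b m := by
    rw [hm', pow_succ', mul_assoc, ← hm']
    refine lt_of_le_of_lt ?_ h6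
    gcongr
  have h9 : (4 : ℝ) ^ (d * (s + 1 + 3)) * b 0 ≤ (1 + (1/2 : ℝ) ^ e) ^ m * b 0 := by
    gcongr; exact h4.trans h5
  linarith

end KM

namespace KM
set_option linter.unusedSectionVars false
open scoped Classical
open Finset
variable {G : Type} [AddCommGroup G] [Fintype G]

lemma hoeff1 (A : Finset G) (Y : G → ℝ) (hY : ∀ u ∈ A, |Y u| ≤ 1) (h0 : ∑ u ∈ A, Y u = 0)
    (n : ℕ) {δ : ℝ} (hδ : 0 < δ) (hδ1 : δ ≤ 1) :
    (((Fintype.piFinset fun _ : Fin n => A).filter fun a => δ * n < ∑ i, Y (a i)).card : ℝ)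
      ≤ Real.exp (-(δ ^ 2 * n / 4)) * (A.card : ℝ) ^ n := by
  have h1 : ∑ u ∈ A, Real.exp (δ / 2 * Y u) ≤ A.card * Real.exp (δ ^ 2 / 4) := by
    calc ∑ u ∈ A, Real.exp (δ / 2 * Y u) ≤ ∑ u ∈ A, (1 + δ ^ 2 / 4 + δ / 2 * Y u) := by
          refine sum_le_sum fun u hu => ?_
          have hy := abs_le.mp (hY u hu)
          have hyy : |δ / 2 * Y u| ≤ 1 := by
            rw [abs_mul, abs_of_pos (by positivity)]
            nlinarith [hY u hu, abs_nonneg (Y u)]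
          have := (abs_le.mp (Real.abs_exp_sub_one_sub_id_le hyy)).2
          have h2 : Y u ^ 2 ≤ 1 := by nlinarith
          nlinarith [mul_le_mul_of_nonneg_left h2 (sq_nonneg (δ / 2))]
      _ = A.card * (1 + δ ^ 2 / 4) := by
          rw [sum_add_distrib, ← mul_sum, h0]; simp; ring
      _ ≤ _ := by
          gcongr
          have := Real.add_one_le_exp (δ ^ 2 / 4); linarith
  have h2 : ∑ a ∈ Fintype.piFinset fun _ : Fin n => A, Real.exp (δ / 2 * ∑ i, Y (a i))
      = (∑ u ∈ A, Real.exp (δ / 2 * Y u)) ^ n := by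
    have := (Finset.prod_univ_sum (fun _ : Fin n => A) (fun _ u => Real.exp (δ / 2 * Y u))).symm
    rw [prod_const, card_univ, Fintype.card_fin] at this
    rw [← this]
    refine sum_congr rfl fun a _ => ?_
    rw [mul_sum, Real.exp_sum]
  have h3 : (((Fintype.piFinset fun _ : Fin n => A).filter fun a => δ * n < ∑ i, Y (a i)).card : ℝ)
      * Real.exp (δ / 2 * (δ * n)) ≤
      ∑ a ∈ Fintype.piFinset fun _ : Fin n => A, Real.exp (δ / 2 * ∑ i, Y (a i)) := by
    rw [← nsmul_eq_mul, ← sum_const]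
    refine (sum_le_sum fun a ha => ?_).trans
      (sum_le_sum_of_subset_of_nonneg (filter_subset _ _) fun _ _ _ => (Real.exp_pos _).le)
    have := (mem_filter.mp ha).2
    refine Real.exp_le_exp.mpr ?_
    exact mul_le_mul_of_nonneg_left this.le (by positivity)
  rw [h2] at h3
  have h4 : (∑ u ∈ A, Real.exp (δ / 2 * Y u)) ^ n ≤ (A.card * Real.exp (δ ^ 2 / 4)) ^ n :=
    pow_le_pow_left₀ (sum_nonneg fun _ _ => (Real.exp_pos _).le) h1 n
  rw [mul_pow, ← Real.exp_nat_mul] at h4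
  have h5 : Real.exp (-(δ ^ 2 * n / 4)) * (A.card : ℝ) ^ n * Real.exp (δ / 2 * (δ * n))
      = (A.card : ℝ) ^ n * Real.exp (n * (δ ^ 2 / 4)) := by
    rw [mul_right_comm, ← Real.exp_add, mul_comm]; congr 2; ring
  refine le_of_mul_le_mul_right ?_ (Real.exp_pos (δ / 2 * (δ * n)))
  rw [h5]; exact h3.trans h4

lemma hoeff2 (A : Finset G) (Y : G → ℝ) (hY : ∀ u ∈ A, |Y u| ≤ 1) (h0 : ∑ u ∈ A, Y u = 0)
    (n : ℕ) {δ : ℝ} (hδ : 0 < δ) (hδ1 : δ ≤ 1) :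
    (((Fintype.piFinset fun _ : Fin n => A).filter fun a => δ * n < |∑ i, Y (a i)|).card : ℝ)
      ≤ 2 * Real.exp (-(δ ^ 2 * n / 4)) * (A.card : ℝ) ^ n := by
  have h1 := hoeff1 A Y hY h0 n hδ hδ1
  have h2 := hoeff1 A (fun u => - Y u) (by simpa using hY) (by simp [h0]) n hδ hδ1
  have h3 : ((Fintype.piFinset fun _ : Fin n => A).filter fun a => δ * n < |∑ i, Y (a i)|) ⊆
      ((Fintype.piFinset fun _ : Fin n => A).filter fun a => δ * n < ∑ i, Y (a i)) ∪
      ((Fintype.piFinset fun _ : Fin n => A).filter fun a => δ * n < ∑ i, - Y (a i)) := by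
    intro a ha
    simp only [mem_union, mem_filter] at *
    rcases lt_abs.mp ha.2 with h | h
    · exact Or.inl ⟨ha.1, h⟩
    · refine Or.inr ⟨ha.1, ?_⟩
      rwa [sum_neg_distrib]
  have h4 : (((Fintype.piFinset fun _ : Fin n => A).filter fun a => δ * n < |∑ i, Y (a i)|).card : ℝ)
     ≤ (((Fintype.piFinset fun _ : Fin n => A).filter fun a => δ * n < ∑ i, Y (a i)).card : ℝ) +
      (((Fintype.piFinset fun _ : Fin n => A).filter fun a => δ * n < ∑ i, - Y (a i)).card : ℝ) := by
    exact_mod_cast (card_le_card h3).trans (card_union_le _ _)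
  linarith

/-- normalised count of `u ∈ A` with `x - u ∈ S` -/
noncomputable def gg (A S : Finset G) (x : G) : ℝ := (∑ u ∈ A, ind S (x - u)) / A.card

lemma gg_nonneg (A S : Finset G) (x : G) : 0 ≤ gg A S x :=
  div_nonneg (sum_nonneg fun _ _ => ind_nonneg _ _) (by positivity)

lemma gg_le_one (A S : Finset G) (x : G) : gg A S x ≤ 1 := by
  unfold gg
  refine div_le_one_of_le₀ ?_ (by positivity)
  calc _ ≤ ∑ u ∈ A, (1 : ℝ) := sum_le_sum fun _ _ => ind_le_one _ _
    _ = _ := by simp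

lemma almost_period (A E Ω S : Finset G) (K δ : ℝ) (n : ℕ) (hA : A.Nonempty)
    (hE : ∀ a ∈ A, ∀ e ∈ E, a + e ∈ Ω) (hΩ : (Ω.card : ℝ) ≤ K * A.card) (hK : 0 < K)
    (hδ : 0 < δ) (hδ1 : δ ≤ 1) (hn0 : 0 < n)
    (hn : 2 * Real.exp (-(δ ^ 2 * n / 4)) ≤ δ / (2 * K)) :
    ∃ X ⊆ E, (E.card : ℝ) ≤ 2 * K ^ n * X.card ∧ ∀ e ∈ X, ∀ e' ∈ X,
      ((Ω.filter fun x => x + (e - e') ∈ Ω ∧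
        2 * δ < |gg A S (x + (e - e')) - gg A S x|).card : ℝ) ≤ 2 * δ * A.card := by
  have hAc : (0 : ℝ) < A.card := by exact_mod_cast card_pos.mpr hA
  let P := Fintype.piFinset fun _ : Fin n => A
  have hPc : (P.card : ℝ) = (A.card : ℝ) ^ n := by
    simp [P, Fintype.card_piFinset]
  let ga : (Fin n → G) → G → ℝ := fun a x => (∑ i, ind S (x - a i)) / n
  let bad : (Fin n → G) → Finset G := fun a => Ω.filter fun x => δ < |ga a x - gg A S x|
  have hn0' : (0 : ℝ) < n := by exact_mod_cast hn0
  have hx : ∀ x, ((P.filter fun a => δ < |ga a x - gg A S x|).card : ℝ)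
      ≤ δ / (2 * K) * (A.card : ℝ) ^ n := by
    intro x
    have h1 := hoeff2 A (fun u => ind S (x - u) - gg A S x) (fun u _ => by
      have := gg_nonneg A S x; have := gg_le_one A S x
      have := ind_nonneg S (x - u); have := ind_le_one S (x - u)
      rw [abs_le]; constructor <;> linarith) (by
      rw [sum_sub_distrib, sum_const, nsmul_eq_mul, gg]; field_simp; ring) n hδ hδ1
    refine le_trans ?_ (h1.trans (mul_le_mul_of_nonneg_right hn (by positivity)))
    have : (P.filter fun a => δ < |ga a x - gg A S x|) ⊆
      (P.filter fun a => δ * n < |∑ i, (ind S (x - a i) - gg A S x)|) := by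
      intro a ha
      rw [mem_filter] at *
      refine ⟨ha.1, ?_⟩
      have e : ∑ i, (ind S (x - a i) - gg A S x) = n * (ga a x - gg A S x) := by
        rw [sum_sub_distrib, sum_const, nsmul_eq_mul]; simp only [ga, card_univ, Fintype.card_fin]
        field_simp
      rw [e, abs_mul, abs_of_pos hn0', mul_comm]
      exact mul_lt_mul_of_pos_left ha.2 hn0'
    exact_mod_cast card_le_card this
  have hsum : ∑ a ∈ P, ((bad a).card : ℝ) ≤ Ω.card * (δ / (2 * K) * (A.card : ℝ) ^ n) := by
    have e1 : ∑ a ∈ P, ((bad a).card : ℝ)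
        = ∑ x ∈ Ω, ((P.filter fun a => δ < |ga a x - gg A S x|).card : ℝ) := by
      simp only [bad, card_filter]
      push_cast
      rw [sum_comm]
    rw [e1, ← nsmul_eq_mul, ← sum_const]
    exact sum_le_sum fun x _ => hx x
  let L := P.filter fun a => ((bad a).card : ℝ) ≤ δ * A.card
  have hL : (A.card : ℝ) ^ n ≤ 2 * L.card := by
    have e1 : ((P.filter fun a => ¬ ((bad a).card : ℝ) ≤ δ * A.card).card : ℝ) * (δ * A.card)
        ≤ ∑ a ∈ P, ((bad a).card : ℝ) := by
      rw [← nsmul_eq_mul, ← sum_const]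
      refine (sum_le_sum fun a ha => ?_).trans
        (sum_le_sum_of_subset_of_nonneg (filter_subset _ _) fun _ _ _ => by positivity)
      exact (not_le.mp (mem_filter.mp ha).2).le
    have e2 : ((L.card : ℝ)) + ((P.filter fun a => ¬ ((bad a).card : ℝ) ≤ δ * A.card).card : ℝ)
        = P.card := by
      exact_mod_cast card_filter_add_card_filter_not (s := P) _
    have e3 : Ω.card * (δ / (2 * K) * (A.card : ℝ) ^ n)
        ≤ (A.card : ℝ) ^ n / 2 * (δ * A.card) := by
      calc _ ≤ (K * A.card) * (δ / (2 * K) * (A.card : ℝ) ^ n) := by gcongr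
        _ = _ := by field_simp
    have e4 : ((P.filter fun a => ¬ ((bad a).card : ℝ) ≤ δ * A.card).card : ℝ)
        ≤ (A.card : ℝ) ^ n / 2 :=
      le_of_mul_le_mul_right (e1.trans (hsum.trans e3)) (by positivity)
    linarith
  let Q := Fintype.piFinset fun _ : Fin n => Ω
  have hQc : (Q.card : ℝ) ≤ K ^ n * (A.card : ℝ) ^ n := by
    simp only [Q, Fintype.card_piFinset, prod_const, card_univ, Fintype.card_fin]
    push_cast
    rw [← mul_pow]
    gcongr
  let XX : (Fin n → G) → Finset G := fun b => E.filter fun e => (fun i => b i - e) ∈ L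
  have hcount : (E.card : ℝ) * L.card ≤ ∑ b ∈ Q, ((XX b).card : ℝ) := by
    have e1 : ∀ e ∈ E, (L.card : ℝ) ≤ ((Q.filter fun b => (fun i => b i - e) ∈ L).card : ℝ) := by
      intro e he
      have : L.card ≤ (Q.filter fun b => (fun i => b i - e) ∈ L).card := by
        refine card_le_card_of_injOn (fun a i => a i + e) ?_ ?_
        · intro a ha
          have ha : a ∈ L := ha
          simp only [coe_filter, Set.mem_ofPred_eq, add_sub_cancel_right]
          refine ⟨?_, ha⟩
          rw [Fintype.mem_piFinset]
          intro i
          exact hE _ (Fintype.mem_piFinset.mp (mem_filter.mp ha).1 i) _ he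
        · intro a _ b _ h
          funext i
          exact add_left_injective e (congrFun h i)
      exact_mod_cast this
    have e2 : ∑ b ∈ Q, ((XX b).card : ℝ)
        = ∑ e ∈ E, ((Q.filter fun b => (fun i => b i - e) ∈ L).card : ℝ) := by
      simp only [XX, card_filter]
      push_cast
      rw [sum_comm]
    rw [e2, ← nsmul_eq_mul, ← sum_const]
    exact sum_le_sum e1
  have hex : ∃ b, (E.card : ℝ) ≤ 2 * K ^ n * (XX b).card := by
    by_contra hcon
    push Not at hcon
    rcases E.eq_empty_or_nonempty with hE0 | hE0
    · have := hcon (fun _ => 0)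
      simp [XX, hE0] at this
    have hEc : (0 : ℝ) < E.card := by exact_mod_cast card_pos.mpr hE0
    obtain ⟨a0, ha0⟩ := hA
    obtain ⟨e0, he0⟩ := hE0
    have hQne : Q.Nonempty := ⟨fun _ => a0 + e0, Fintype.mem_piFinset.mpr fun _ => hE _ ha0 _ he0⟩
    have h1 : ∑ b ∈ Q, 2 * K ^ n * ((XX b).card : ℝ) < ∑ b ∈ Q, (E.card : ℝ) :=
      sum_lt_sum_of_nonempty hQne fun b _ => hcon b
    rw [← mul_sum, sum_const, nsmul_eq_mul] at h1
    have hKn : 0 < K ^ n := by positivity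
    have h2 : 2 * K ^ n * ((E.card : ℝ) * L.card) ≤ 2 * K ^ n * ∑ b ∈ Q, ((XX b).card : ℝ) := by
      gcongr
    have h3 : (E.card : ℝ) * K ^ n * (A.card : ℝ) ^ n ≤ (E.card : ℝ) * K ^ n * (2 * L.card) := by
      gcongr
    have h4 : (Q.card : ℝ) * E.card ≤ (K ^ n * (A.card : ℝ) ^ n) * E.card := by gcongr
    linarith
  obtain ⟨b, hb⟩ := hex
  refine ⟨XX b, filter_subset _ _, hb, fun e he e' he' => ?_⟩
  have he := (mem_filter.mp (mem_filter.mp he).2).2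
  have he' := (mem_filter.mp (mem_filter.mp he').2).2
  have hsub : (Ω.filter fun x => x + (e - e') ∈ Ω ∧
        2 * δ < |gg A S (x + (e - e')) - gg A S x|) ⊆
        bad (fun i => b i - e) ∪ (bad (fun i => b i - e')).image (fun x => x - (e - e')) := by
    intro x hx
    rw [mem_filter] at hx
    obtain ⟨hx1, hx2, hx3⟩ := hx
    by_contra hnot
    rw [mem_union, not_or] at hnot
    obtain ⟨n1, n2⟩ := hnot
    have m1 : |ga (fun i => b i - e) x - gg A S x| ≤ δ := by
      by_contra h; push Not at h; exact n1 (mem_filter.mpr ⟨hx1, h⟩)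
    have m2 : |ga (fun i => b i - e') (x + (e - e')) - gg A S (x + (e - e'))| ≤ δ := by
      by_contra h; push Not at h
      exact n2 (mem_image.mpr ⟨x + (e - e'), mem_filter.mpr ⟨hx2, h⟩, by abel⟩)
    have m3 : ga (fun i => b i - e) x = ga (fun i => b i - e') (x + (e - e')) := by
      simp only [ga]
      congr 1
      refine sum_congr rfl fun i _ => ?_
      congr 1; abel
    rw [m3] at m1
    rw [abs_le] at m1 m2
    have : |gg A S (x + (e - e')) - gg A S x| ≤ 2 * δ := by
      rw [abs_le]; constructor <;> linarith [m1.1, m1.2, m2.1, m2.2]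
    linarith
  have h1 := (card_le_card hsub).trans (card_union_le _ _)
  have h2 : ((bad (fun i => b i - e')).image (fun x => x - (e - e'))).card
      ≤ (bad (fun i => b i - e')).card := card_image_le
  have h3 : ((Ω.filter fun x => x + (e - e') ∈ Ω ∧
        2 * δ < |gg A S (x + (e - e')) - gg A S x|).card : ℝ) ≤
      ((bad (fun i => b i - e)).card : ℝ) + ((bad (fun i => b i - e')).card : ℝ) := by
    exact_mod_cast h1.trans (Nat.add_le_add_left h2 _)
  linarith

end KM

namespace KM
set_option linter.unusedSectionVars false
open scoped Classical
open Finset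
variable {G : Type} [AddCommGroup G] [Fintype G]

def TT : Finset ℤ := {-1, 0, 1}

noncomputable def chp {r : ℕ} (l : Fin r → AddChar G ℂ) (ε : Fin r → ℤ) : AddChar G ℂ :=
  ∏ i, l i ^ ε i

lemma chp_apply {r : ℕ} (l : Fin r → AddChar G ℂ) (ε : Fin r → ℤ) (x : G) :
    chp l ε x = ∏ i, (l i x) ^ (ε i) := by
  unfold chp
  rw [AddChar.prod_apply]
  simp [AddChar.zpow_apply]

lemma chp_succ {r : ℕ} (l : Fin (r+1) → AddChar G ℂ) (ε : Fin (r+1) → ℤ) :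
    chp l ε = chp (fun i => l i.castSucc) (fun i => ε i.castSucc) * l (Fin.last r) ^ ε (Fin.last r) := by
  unfold chp
  rw [Fin.prod_univ_castSucc]

lemma chp_neg {r : ℕ} (l : Fin r → AddChar G ℂ) (ε : Fin r → ℤ) :
    chp l (fun i => - ε i) = (chp l ε)⁻¹ := by
  unfold chp
  simp

/-- relative dissociativity -/
def Diss (E : Finset G) {r : ℕ} (l : Fin r → AddChar G ℂ) : Prop :=
  ∀ ε : Fin r → ℤ, (∀ i, ε i ∈ TT) → ε ≠ 0 → ‖∑ x ∈ E, chp l ε x‖ < E.card / 2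

lemma char_sum_le (E : Finset G) (χ : AddChar G ℂ) : ‖∑ x ∈ E, χ x‖ ≤ E.card := by
  refine (norm_sum_le _ _).trans ?_
  simp [AddChar.norm_apply]

lemma map_sum_prod {ι : Type} (χ : AddChar G ℂ) (s : Finset ι) (f : ι → G) :
    χ (∑ i ∈ s, f i) = ∏ i ∈ s, χ (f i) := by
  induction s using Finset.induction_on with
  | empty => simp
  | insert a s ha ih => rw [sum_insert ha, prod_insert ha, AddChar.map_add_eq_mul, ih]

lemma sum_pi_char (E : Finset G) (χ : AddChar G ℂ) (k : ℕ) :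
    ∑ f ∈ Fintype.piFinset (fun _ : Fin k => E), χ (∑ i, f i) = (∑ x ∈ E, χ x) ^ k := by
  have := (Finset.prod_univ_sum (fun _ : Fin k => E) (fun _ u => χ u)).symm
  rw [prod_const, card_univ, Fintype.card_fin] at this
  rw [← this]
  refine sum_congr rfl fun a _ => ?_
  exact map_sum_prod χ _ a

noncomputable def cf (ω : ℂ) (j : ℤ) : ℂ :=
  if j = 0 then (Real.cosh (1/2) : ℂ) else
    if j = 1 then (Real.sinh (1/2) : ℂ) / 2 * ω else (Real.sinh (1/2) : ℂ) / 2 * (starRingEnd ℂ ω)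

lemma sum_TT {M : Type} [AddCommMonoid M] (F : ℤ → M) : ∑ j ∈ TT, F j = F (-1) + (F 0 + F 1) := by
  unfold TT
  rw [sum_insert (by decide), sum_insert (by decide), sum_singleton]

lemma cf_sum (ω z : ℂ) (hz : ‖z‖ = 1) :
    ∑ j ∈ TT, cf ω j * z ^ j
      = ((Real.cosh (1/2) + (ω * z).re * Real.sinh (1/2) : ℝ) : ℂ) := by
  rw [sum_TT]
  have hzi : z⁻¹ = starRingEnd ℂ z := Complex.inv_eq_conj hz
  simp only [cf, zpow_neg, zpow_one, zpow_zero, hzi]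
  norm_num
  have h : ((ω * z).re : ℂ) = (ω * z + starRingEnd ℂ (ω * z)) / 2 := by
    rw [Complex.re_eq_add_conj]
  have h2 : (ω.re * z.re - ω.im * z.im : ℂ) = ((ω * z).re : ℂ) := by
    rw [Complex.mul_re]; push_cast; ring
  try rw [h2]
  rw [h, map_mul]; ring

lemma cf_norm_sum (ω : ℂ) (hω : ‖ω‖ = 1) : ∑ j ∈ TT, ‖cf ω j‖ = Real.exp (1/2) := by
  rw [sum_TT, ← Real.cosh_add_sinh]
  have hs : 0 < Real.sinh (1/2) := Real.sinh_pos_iff.mpr (by norm_num)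
  have hc : 0 < Real.cosh (1/2) := Real.cosh_pos _
  have e1 : ‖cf ω (-1)‖ = Real.sinh (1/2) / 2 := by
    simp only [cf]
    rw [if_neg (by decide), if_neg (by decide), norm_mul, RCLike.norm_conj, hω, norm_div,
      Complex.norm_real, Real.norm_of_nonneg hs.le]; simp
  have e2 : ‖cf ω 0‖ = Real.cosh (1/2) := by
    unfold cf
    rw [if_pos rfl, Complex.norm_real, Real.norm_of_nonneg hc.le]
  have e3 : ‖cf ω 1‖ = Real.sinh (1/2) / 2 := by
    unfold cf
    rw [if_neg (by decide), if_pos rfl, norm_mul, hω, norm_div,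
      Complex.norm_real, Real.norm_of_nonneg hs.le]; simp
  rw [e1, e2, e3]; ring

lemma chang_card {r k : ℕ} (l : Fin r → AddChar G ℂ) (X Ep E : Finset G) (M : ℝ)
    (hX : X.Nonempty) (hE : E.Nonempty)
    (hEp : ∀ x ∈ X, ∀ f : Fin k → G, (∀ i, f i ∈ E) → x - ∑ i, f i ∈ Ep)
    (hM : (Ep.card : ℝ) ≤ M * X.card) (hd : Diss E l)
    (hl : ∀ i, (X.card : ℝ) / 2 ≤ ‖∑ x ∈ X, l i x‖) (hrk : r ≤ k) :
    Real.exp (r / 8) ≤ 2 * M := by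
  have hXc : (0 : ℝ) < X.card := by exact_mod_cast card_pos.mpr hX
  have hEc : (0 : ℝ) < E.card := by exact_mod_cast card_pos.mpr hE
  choose ω hω1 hω2 using fun i => Complex.exists_norm_eq_mul_self (∑ x ∈ X, l i x)
  let Φ : G → ℝ := fun x =>
    ∏ i, (Real.cosh (1/2) + (ω i * l i x).re * Real.sinh (1/2))
  have hle : ∀ i x, |(ω i * l i x).re| ≤ 1 := by
    intro i x
    refine (Complex.abs_re_le_norm _).trans ?_
    rw [norm_mul, hω1, AddChar.norm_apply]; norm_num
  have hΦ1 : ∀ x, Real.exp (∑ i, (ω i * l i x).re * (1/2)) ≤ Φ x := by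
    intro x
    rw [Real.exp_sum]
    exact prod_le_prod (fun _ _ => (Real.exp_pos _).le)
      fun i _ => Real.exp_mul_le_cosh_add_mul_sinh (hle i x) _
  have hΦ0 : ∀ x, 0 ≤ Φ x := fun x => (Real.exp_pos _).le.trans (hΦ1 x)
  -- lower bound
  have hlow : X.card * Real.exp (r / 4) ≤ ∑ x ∈ X, Φ x := by
    have e1 : ∀ x ∈ X, Real.exp (r / 4) * (1 + (∑ i, (ω i * l i x).re * (1/2) - r / 4)) ≤ Φ x := by
      intro x _
      refine le_trans ?_ (hΦ1 x)
      have := Real.add_one_le_exp (∑ i, (ω i * l i x).re * (1/2) - (r / 4 : ℝ))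
      calc _ ≤ Real.exp (r / 4) * Real.exp (∑ i, (ω i * l i x).re * (1/2) - (r / 4 : ℝ)) := by
            gcongr; linarith
        _ = _ := by rw [← Real.exp_add]; congr 1; ring
    have e2 : (r : ℝ) / 4 * X.card ≤ ∑ x ∈ X, ∑ i, (ω i * l i x).re * (1/2) := by
      rw [sum_comm]
      have : ∀ i, (X.card : ℝ) / 4 ≤ ∑ x ∈ X, (ω i * l i x).re * (1/2) := by
        intro i
        rw [← sum_mul, ← Complex.re_sum, ← mul_sum, ← hω2 i, Complex.ofReal_re]
        linarith [hl i]
      calc (r : ℝ) / 4 * X.card = ∑ _i : Fin r, (X.card : ℝ) / 4 := by simp; ring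
        _ ≤ _ := sum_le_sum fun i _ => this i
    refine le_trans ?_ (sum_le_sum e1)
    rw [← mul_sum, sum_add_distrib, sum_sub_distrib, mul_comm]
    gcongr
    simp only [sum_const, nsmul_eq_mul, mul_one]
    linarith
  -- transfer
  let PE := Fintype.piFinset (fun _ : Fin k => E)
  have hPEc : (PE.card : ℝ) = (E.card : ℝ) ^ k := by simp [PE, Fintype.card_piFinset]
  have htr : (E.card : ℝ) ^ k * ∑ x ∈ X, Φ x ≤ ∑ f ∈ PE, ∑ e ∈ Ep, Φ (e + ∑ i, f i) := by
    rw [← hPEc, ← nsmul_eq_mul, ← sum_const]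
    refine sum_le_sum fun f hf => ?_
    have hf := Fintype.mem_piFinset.mp hf
    have : ∑ x ∈ X, Φ x = ∑ e ∈ X.image (fun x => x - ∑ i, f i), Φ (e + ∑ i, f i) := by
      rw [sum_image (fun a _ b _ h => sub_left_injective h)]
      simp
    rw [this]
    refine sum_le_sum_of_subset_of_nonneg ?_ fun _ _ _ => hΦ0 _
    intro y hy
    obtain ⟨x, hx, rfl⟩ := mem_image.mp hy
    exact hEp x hx f hf
  -- expansion
  let PT := Fintype.piFinset (fun _ : Fin r => TT)
  have hexp : ∀ x, (Φ x : ℂ) = ∑ p ∈ PT, (∏ i, cf (ω i) (p i)) * chp l (p) x := by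
    intro x
    simp only [Φ, PT]
    push_cast [Complex.ofReal_prod]
    have := fun i => cf_sum (ω i) (l i x) (AddChar.norm_apply _ _)
    push_cast at this
    simp_rw [← this]
    rw [Finset.prod_univ_sum]
    refine sum_congr rfl fun p _ => ?_
    rw [prod_mul_distrib, chp_apply]
  have hup : ∑ f ∈ PE, ∑ e ∈ Ep, Φ (e + ∑ i, f i)
      ≤ Ep.card * (E.card : ℝ) ^ k * (2 * Real.exp (r / 8)) := by
    have e1 : ((∑ f ∈ PE, ∑ e ∈ Ep, Φ (e + ∑ i, f i) : ℝ) : ℂ)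
        = ∑ p ∈ PT, (∏ i, cf (ω i) (p i)) *
          ((∑ e ∈ Ep, chp l p e) * (∑ x ∈ E, chp l (p) x) ^ k) := by
      push_cast
      simp_rw [hexp, ← sum_pi_char, sum_mul_sum, mul_sum]
      rw [sum_congr rfl fun f _ => sum_comm, sum_comm]
      refine sum_congr rfl fun p _ => ?_
      rw [sum_comm]
      refine sum_congr rfl fun e _ => sum_congr rfl fun f _ => ?_
      rw [AddChar.map_add_eq_mul]
    have e2 : ∀ p ∈ PT, ‖(∏ i, cf (ω i) (p i)) *
          ((∑ e ∈ Ep, chp l p e) * (∑ x ∈ E, chp l (p) x) ^ k)‖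
        ≤ (Ep.card * (E.card : ℝ) ^ k) * ((if p = 0 then Real.cosh (1/2) ^ r else 0)
           + (1/2) ^ k * ∏ i, ‖cf (ω i) (p i)‖) := by
      intro p hp
      have hp := Fintype.mem_piFinset.mp hp
      rw [norm_mul, norm_mul, norm_pow, norm_prod]
      have hprod : 0 ≤ ∏ i, ‖cf (ω i) (p i)‖ := prod_nonneg fun _ _ => norm_nonneg _
      have a1 := char_sum_le Ep (chp l p)
      by_cases h0 : p = 0
      · rw [if_pos h0]
        have a2 := char_sum_le E (chp l p)
        have a3 : ∏ i, ‖cf (ω i) (p i)‖ = Real.cosh (1/2) ^ r := by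
          rw [h0]
          simp only [cf, Pi.zero_apply, if_true, Complex.norm_real,
            Real.norm_of_nonneg (Real.cosh_pos _).le, prod_const, card_univ, Fintype.card_fin]
        calc _ ≤ (∏ i, ‖cf (ω i) (p i)‖) * (Ep.card * (E.card : ℝ) ^ k) := by gcongr
          _ = (Ep.card * (E.card : ℝ) ^ k) * Real.cosh (1/2) ^ r := by rw [a3]; ring
          _ ≤ _ := by
            gcongr
            have : 0 ≤ (1/2 : ℝ) ^ k * ∏ i, ‖cf (ω i) (p i)‖ := by positivity
            linarith
      · rw [if_neg h0, zero_add]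
        have a2 := (hd p hp h0).le
        calc _ ≤ (∏ i, ‖cf (ω i) (p i)‖) * (Ep.card * ((E.card : ℝ) / 2) ^ k) := by gcongr
          _ = _ := by rw [div_pow, one_div, inv_pow]; field_simp
    have e3 : ∑ p ∈ PT, ∏ i, ‖cf (ω i) (p i)‖ = Real.exp (1/2) ^ r := by
      have := (Finset.prod_univ_sum (fun _ : Fin r => TT) (fun i j => ‖cf (ω i) j‖)).symm
      rw [this]
      simp [cf_norm_sum _ (hω1 _)]
    have h0mem : (0 : Fin r → ℤ) ∈ PT := Fintype.mem_piFinset.mpr fun _ => by simp [TT]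
    have e4 : ∑ f ∈ PE, ∑ e ∈ Ep, Φ (e + ∑ i, f i)
        ≤ (Ep.card * (E.card : ℝ) ^ k) * (Real.cosh (1/2) ^ r + (1/2) ^ k * Real.exp (1/2) ^ r) := by
      calc ∑ f ∈ PE, ∑ e ∈ Ep, Φ (e + ∑ i, f i)
          ≤ ‖((∑ f ∈ PE, ∑ e ∈ Ep, Φ (e + ∑ i, f i) : ℝ) : ℂ)‖ := by
            rw [Complex.norm_real]; exact le_abs_self _
        _ ≤ _ := by
            rw [e1]
            refine (norm_sum_le _ _).trans ((sum_le_sum e2).trans ?_)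
            rw [← mul_sum, sum_add_distrib, ← mul_sum, e3, sum_ite_eq' PT 0, if_pos h0mem]
    refine e4.trans ?_
    gcongr
    have c1 : Real.cosh (1/2) ^ r ≤ Real.exp (r / 8) := by
      calc Real.cosh (1/2) ^ r ≤ Real.exp ((1/2) ^ 2 / 2) ^ r :=
            pow_le_pow_left₀ (Real.cosh_pos _).le (Real.cosh_le_exp_half_sq _) _
        _ = _ := by rw [← Real.exp_nat_mul]; congr 1; ring
    have c2 : (1/2 : ℝ) ^ k * Real.exp (1/2) ^ r ≤ 1 := by
      have b1 : (1/2 : ℝ) ^ k ≤ (1/2) ^ r := pow_le_pow_of_le_one (by norm_num) (by norm_num) hrk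
      have b2 : Real.exp (1/2) ≤ 2 := by
        have : Real.exp (1/2) ^ 2 ≤ 2 ^ 2 := by
          rw [← Real.exp_nat_mul]; norm_num; linarith [Real.exp_one_lt_d9]
        exact le_of_sq_le_sq this (by norm_num)
      calc _ ≤ (1/2 : ℝ) ^ r * 2 ^ r := by gcongr
        _ = 1 := by rw [← mul_pow]; norm_num
    have c3 : 1 ≤ Real.exp (r / 8 : ℝ) := Real.one_le_exp (by positivity)
    linarith
  have h1 : (E.card : ℝ) ^ k * (X.card * Real.exp (r / 4))
      ≤ (M * X.card) * (E.card : ℝ) ^ k * (2 * Real.exp (r / 8)) := by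
    calc _ ≤ (E.card : ℝ) ^ k * ∑ x ∈ X, Φ x := by gcongr
      _ ≤ _ := htr.trans hup
      _ ≤ _ := by gcongr
  have h2 : Real.exp (r / 4 : ℝ) = Real.exp (r / 8) * Real.exp (r / 8) := by
    rw [← Real.exp_add]; congr 1; ring
  rw [h2] at h1
  refine le_of_mul_le_mul_right ?_
    (by positivity : 0 < (E.card : ℝ) ^ k * X.card * Real.exp (r / 8 : ℝ))
  linarith

lemma chang (R : ℕ) (X Ep E : Finset G) (M : ℝ)
    (hX : X.Nonempty) (hE : E.Nonempty)
    (hEp : ∀ x ∈ X, ∀ f : Fin R → G, (∀ i, f i ∈ E) → x - ∑ i, f i ∈ Ep)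
    (hM : (Ep.card : ℝ) ≤ M * X.card) (hR : 2 * M < Real.exp (R / 8)) :
    ∃ r ≤ R, ∃ l : Fin r → AddChar G ℂ, ∀ γ : AddChar G ℂ,
      (X.card : ℝ) / 2 ≤ ‖∑ x ∈ X, γ x‖ → ∃ ε : Fin r → ℤ, (∀ i, ε i ∈ TT) ∧
        (E.card : ℝ) / 2 ≤ ‖∑ x ∈ E, (γ * chp l ε) x‖ := by
  let p : ℕ → Prop := fun r => ∃ l : Fin r → AddChar G ℂ, Diss E l ∧
    ∀ i, (X.card : ℝ) / 2 ≤ ‖∑ x ∈ X, l i x‖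
  have hp0 : p 0 := ⟨Fin.elim0, fun ε _ h => absurd (Subsingleton.elim ε 0) h, fun i => i.elim0⟩
  obtain ⟨r, hrR, ⟨l, hl1, hl2⟩, hmax⟩ : ∃ r ≤ R, p r ∧ ∀ r' ≤ R, p r' → r' ≤ r :=
    ⟨Nat.findGreatest p R, Nat.findGreatest_le R, Nat.findGreatest_spec (Nat.zero_le R) hp0,
      fun r' h h' => Nat.le_findGreatest h h'⟩
  have hrlt : r < R := by
    rcases hrR.lt_or_eq with h | h
    · exact h
    · exfalso
      have := chang_card l X Ep E M hX hE hEp hM hl1 hl2 hrR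
      rw [h] at this; linarith
  refine ⟨r, hrR, l, fun γ hγ => ?_⟩
  by_contra hcon
  push Not at hcon
  have : p (r + 1) := by
    refine ⟨Fin.snoc l γ, ?_, ?_⟩
    · intro ε hε hε0
      rw [chp_succ]
      simp only [Fin.snoc_castSucc, Fin.snoc_last]
      have hlast := hε (Fin.last r)
      simp only [TT, mem_insert, mem_singleton] at hlast
      rcases hlast with h | h | h
      · have := hcon (fun i => - ε i.castSucc) (fun i => by
          have := hε i.castSucc
          simp only [TT, mem_insert, mem_singleton] at *; omega)
        rw [h]
        refine lt_of_eq_of_lt ?_ this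
        rw [← RCLike.norm_conj, map_sum]
        congr 1
        refine sum_congr rfl fun x _ => ?_
        rw [← AddChar.map_neg_eq_conj, ← AddChar.inv_apply]
        congr 1
        rw [mul_inv, mul_comm, zpow_neg, zpow_one, inv_inv, ← chp_neg]
      · rw [h, zpow_zero, mul_one]
        refine hl1 (fun i => ε i.castSucc) (fun i => hε _) fun h0 => hε0 ?_
        funext i
        refine Fin.lastCases h (fun j => congrFun h0 j) i
      · rw [h, zpow_one, mul_comm]
        exact hcon (fun i => ε i.castSucc) (fun i => hε _)
    · intro i
      refine Fin.lastCases ?_ (fun j => ?_) i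
      · simpa using hγ
      · simpa using hl2 j
  have := hmax (r + 1) hrlt this
  omega

lemma spec_inv (E V : Finset G) (η : ℝ) (h : Inv E V η) (h0 : (0 : G) ∈ V) (hE : E.Nonempty)
    (χ : AddChar G ℂ) (hχ : (E.card : ℝ) / 2 ≤ ‖∑ x ∈ E, χ x‖) {y : G} (hy : y ∈ V)
    (hy' : -y ∈ V) : ‖χ y - 1‖ ≤ 4 * η := by
  have hEc : (0 : ℝ) < E.card := by exact_mod_cast card_pos.mpr hE
  have h1 := h.card h0 hy
  have h2 := h.card h0 hy'
  have e1 : (χ y - 1) * ∑ x ∈ E, χ x = ∑ x ∈ E.filter (fun x => x + y ∉ E), χ (x + y)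
      - ∑ x ∈ E.filter (fun x => x + -y ∉ E), χ x := by
    have a1 : (χ y - 1) * ∑ x ∈ E, χ x = ∑ x ∈ E, χ (x + y) - ∑ x ∈ E, χ x := by
      rw [sub_mul, one_mul, mul_sum]; congr 1
      refine sum_congr rfl fun x _ => ?_
      rw [AddChar.map_add_eq_mul, mul_comm]
    rw [a1, ← sum_filter_add_sum_filter_not E (fun x => x + y ∈ E) (fun x => χ (x + y)),
      ← sum_filter_add_sum_filter_not E (fun x => x + -y ∈ E) (fun x => χ x)]
    have a2 : ∑ x ∈ E.filter (fun x => x + y ∈ E), χ (x + y)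
        = ∑ x ∈ E.filter (fun x => x + -y ∈ E), χ x := by
      refine sum_bij (fun x _ => x + y) ?_ ?_ ?_ ?_
      · intro x hx; simp only [mem_filter] at *; simpa using hx.symm
      · intro a _ b _ h; exact add_left_injective y h
      · intro b hb; simp only [mem_filter] at *
        exact ⟨b + -y, by simpa using hb.symm, by abel⟩
      · intros; rfl
    rw [a2]; ring
  have e2 : ‖χ y - 1‖ * ‖∑ x ∈ E, χ x‖ ≤ η * E.card + η * E.card := by
    rw [← norm_mul, e1]
    refine (norm_sub_le _ _).trans (add_le_add ?_ ?_)
    · refine (norm_sum_le _ _).trans (le_trans ?_ h1); simp [AddChar.norm_apply]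
    · exact (char_sum_le _ _).trans h2
  have e3 : ‖χ y - 1‖ * (E.card / 2) ≤ ‖χ y - 1‖ * ‖∑ x ∈ E, χ x‖ := by gcongr
  refine le_of_mul_le_mul_right ?_ (by positivity : (0 : ℝ) < E.card / 2)
  linarith

lemma zpow_TT_close (χ : AddChar G ℂ) {j : ℤ} (hj : j ∈ TT) (y : G) :
    ‖(χ ^ j) y - 1‖ ≤ ‖χ y - 1‖ := by
  simp only [TT, mem_insert, mem_singleton] at hj
  rcases hj with rfl | rfl | rfl
  · rw [zpow_neg, zpow_one, AddChar.inv_apply, char_neg_sub_one]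
  · simp
  · simp

lemma mul_char_close (χ ψ : AddChar G ℂ) (y : G) :
    ‖(χ * ψ) y - 1‖ ≤ ‖χ y - 1‖ + ‖ψ y - 1‖ := by
  have h : (χ * ψ) y - 1 = χ y * (ψ y - 1) + (χ y - 1) := by
    rw [AddChar.mul_apply]; ring
  rw [h]
  refine (norm_add_le _ _).trans ?_
  rw [norm_mul, AddChar.norm_apply, one_mul]; linarith

lemma prod_char_close {r : ℕ} (l : Fin r → AddChar G ℂ) (y : G) {η : ℝ}
    (h : ∀ i, ‖l i y - 1‖ ≤ η) : ‖((∏ i, l i : AddChar G ℂ)) y - 1‖ ≤ r * η := by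
  induction r with
  | zero => simp
  | succ r ih =>
    rw [Fin.prod_univ_castSucc]
    refine (mul_char_close _ _ _).trans ?_
    have := ih (fun i => l i.castSucc) fun i => h _
    have := h (Fin.last r)
    rw [Nat.cast_succ]; linarith

lemma char_close {r : ℕ} (γ : AddChar G ℂ) (l : Fin r → AddChar G ℂ) (ε : Fin r → ℤ)
    (hε : ∀ i, ε i ∈ TT) (y : G) {η η' : ℝ} (h : ∀ i, ‖l i y - 1‖ ≤ η)
    (h' : ‖(γ * chp l ε) y - 1‖ ≤ η') : ‖γ y - 1‖ ≤ η' + r * η := by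
  have e1 := prod_char_close (fun i => l i ^ ε i) y fun i => (zpow_TT_close (l i) (hε i) y).trans (h i)
  change ‖(chp l ε) y - 1‖ ≤ _ at e1
  have e2 : γ = (γ * chp l ε) * (chp l ε)⁻¹ := by simp
  rw [e2]
  refine (mul_char_close _ _ _).trans ?_
  rw [AddChar.inv_apply, char_neg_sub_one]
  linarith

end KM

namespace KM
set_option linter.unusedSectionVars false
open scoped Classical
open Finset
variable {G : Type} [AddCommGroup G] [Fintype G]

lemma norm_sq_sum (S : Finset G) (γ : AddChar G ℂ) :
    (((‖∑ a ∈ S, γ a‖ ^ 2 : ℝ)) : ℂ) = (∑ a ∈ S, γ a) * (∑ a ∈ S, γ (-a)) := by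
  have : ∑ a ∈ S, γ (-a) = starRingEnd ℂ (∑ a ∈ S, γ a) := by
    rw [map_sum]; exact sum_congr rfl fun a _ => AddChar.map_neg_eq_conj _ _
  rw [this, Complex.mul_conj, Complex.normSq_eq_norm_sq]

lemma cor_fourier (A : Finset G) (t : G) :
    ((Fintype.card G : ℂ)) * ((cor (ind A) (ind A) t : ℝ) : ℂ)
      = ∑ γ : AddChar G ℂ, ((‖∑ a ∈ A, γ a‖ ^ 2 : ℝ) : ℂ) * γ t := by
  have h1 : ∀ γ : AddChar G ℂ, ((‖∑ a ∈ A, γ a‖ ^ 2 : ℝ) : ℂ) * γ t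
      = ∑ a ∈ A, ∑ a' ∈ A, γ (a + t - a') := by
    intro γ
    rw [norm_sq_sum, sum_mul_sum, sum_mul]
    refine sum_congr rfl fun a _ => ?_
    rw [sum_mul]
    refine sum_congr rfl fun a' _ => ?_
    rw [← AddChar.map_add_eq_mul, ← AddChar.map_add_eq_mul]; congr 1; abel
  simp_rw [h1]
  rw [sum_comm, cor_ind]
  push_cast
  rw [mul_sum]
  refine sum_congr rfl fun a _ => ?_
  rw [sum_comm]
  simp_rw [AddChar.sum_apply_eq_ite, sub_eq_zero]
  rw [sum_ite_eq]
  unfold ind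
  split_ifs <;> simp

/-- the smoothed sum -/
noncomputable def QS (A A' X : Finset G) (k : ℕ) (y : G) : ℝ :=
  ∑ u ∈ A', ∑ v ∈ A', ∑ e ∈ Fintype.piFinset (fun _ : Fin k => X),
    ∑ e' ∈ Fintype.piFinset (fun _ : Fin k => X),
      cor (ind A) (ind A) (v - u + (∑ i, e i - ∑ i, e' i) + y)

lemma QS_fourier (A A' X : Finset G) (k : ℕ) (y : G) :
    ((Fintype.card G : ℂ)) * (QS A A' X k y : ℂ)
      = ∑ γ : AddChar G ℂ, ((‖∑ a ∈ A, γ a‖ ^ 2 * (‖∑ a ∈ A', γ a‖ ^ 2 *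
          (‖∑ a ∈ X, γ a‖ ^ 2) ^ k) : ℝ) : ℂ) * γ y := by
  have h1 : ∀ γ : AddChar G ℂ,
      ((‖∑ a ∈ A', γ a‖ ^ 2 * (‖∑ a ∈ X, γ a‖ ^ 2) ^ k : ℝ) : ℂ) * γ y
      = ∑ u ∈ A', ∑ v ∈ A', ∑ e ∈ Fintype.piFinset (fun _ : Fin k => X),
    ∑ e' ∈ Fintype.piFinset (fun _ : Fin k => X), γ (v - u + (∑ i, e i - ∑ i, e' i) + y) := by
    intro γ
    have hX : ((‖∑ a ∈ X, γ a‖ ^ 2 : ℝ) : ℂ) ^ k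
        = (∑ e ∈ Fintype.piFinset (fun _ : Fin k => X), γ (∑ i, e i)) *
          (∑ e ∈ Fintype.piFinset (fun _ : Fin k => X), γ (- ∑ i, e i)) := by
      rw [norm_sq_sum, mul_pow, sum_pi_char]
      congr 1
      have := sum_pi_char X γ⁻¹ k
      simp only [AddChar.inv_apply] at this
      rw [← this]
    rw [Complex.ofReal_mul, Complex.ofReal_pow (‖∑ a ∈ X, γ a‖ ^ 2) k, hX, norm_sq_sum, mul_comm (∑ a ∈ A', γ a),
      sum_mul_sum, sum_mul_sum, sum_mul, sum_mul]
    refine sum_congr rfl fun u _ => ?_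
    rw [sum_mul, sum_mul]
    refine sum_congr rfl fun v _ => ?_
    rw [mul_sum, sum_mul]
    refine sum_congr rfl fun e _ => ?_
    rw [mul_sum, sum_mul]
    refine sum_congr rfl fun e' _ => ?_
    simp only [← AddChar.map_add_eq_mul]
    congr 1; abel
  have h2 : ∀ γ : AddChar G ℂ, ((‖∑ a ∈ A, γ a‖ ^ 2 * (‖∑ a ∈ A', γ a‖ ^ 2 *
          (‖∑ a ∈ X, γ a‖ ^ 2) ^ k) : ℝ) : ℂ) * γ y
      = ∑ u ∈ A', ∑ v ∈ A', ∑ e ∈ Fintype.piFinset (fun _ : Fin k => X),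
    ∑ e' ∈ Fintype.piFinset (fun _ : Fin k => X), ((‖∑ a ∈ A, γ a‖ ^ 2 : ℝ) : ℂ)
      * γ (v - u + (∑ i, e i - ∑ i, e' i) + y) := by
    intro γ
    rw [Complex.ofReal_mul, mul_assoc, h1]
    simp only [mul_sum]
  simp_rw [h2]
  unfold QS
  push_cast
  simp only [mul_sum]
  symm
  rw [sum_comm]
  refine sum_congr rfl fun u _ => ?_
  rw [sum_comm]
  refine sum_congr rfl fun v _ => ?_
  rw [sum_comm]
  refine sum_congr rfl fun e _ => ?_
  rw [sum_comm]
  refine sum_congr rfl fun e' _ => ?_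
  have := cor_fourier A (v - u + (∑ i, e i - ∑ i, e' i) + y)
  push_cast at this
  rw [this]

lemma cor_zero (A : Finset G) : cor (ind A) (ind A) 0 = A.card := by
  rw [cor_ind]
  simp [ind]

lemma QS_close (A A' X : Finset G) (k : ℕ) (y : G) {η : ℝ} (hη : 0 ≤ η)
    (h : ∀ γ : AddChar G ℂ, (X.card : ℝ) / 2 ≤ ‖∑ x ∈ X, γ x‖ → ‖γ y - 1‖ ≤ η) :
    |QS A A' X k y - QS A A' X k 0|
      ≤ A.card * ((A'.card : ℝ) ^ 2 * ((X.card : ℝ) ^ 2) ^ k) * (2 * (1/4) ^ k + η) := by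
  have hN : (0 : ℝ) < Fintype.card G := by exact_mod_cast Fintype.card_pos
  have hpars : ∑ γ : AddChar G ℂ, ‖∑ a ∈ A, γ a‖ ^ 2 = Fintype.card G * A.card := by
    have := cor_fourier A 0
    rw [cor_zero] at this
    simp only [AddChar.map_zero_eq_one, mul_one] at this
    exact_mod_cast this.symm
  have e1 : ((Fintype.card G : ℂ)) * ((QS A A' X k y - QS A A' X k 0 : ℝ) : ℂ)
      = ∑ γ : AddChar G ℂ, ((‖∑ a ∈ A, γ a‖ ^ 2 * (‖∑ a ∈ A', γ a‖ ^ 2 *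
          (‖∑ a ∈ X, γ a‖ ^ 2) ^ k) : ℝ) : ℂ) * (γ y - 1) := by
    rw [Complex.ofReal_sub, mul_sub, QS_fourier, QS_fourier, ← sum_sub_distrib]
    refine sum_congr rfl fun γ _ => ?_
    rw [AddChar.map_zero_eq_one, mul_sub]
  have e2 : ∀ γ : AddChar G ℂ, ‖((‖∑ a ∈ A, γ a‖ ^ 2 * (‖∑ a ∈ A', γ a‖ ^ 2 *
          (‖∑ a ∈ X, γ a‖ ^ 2) ^ k) : ℝ) : ℂ) * (γ y - 1)‖
      ≤ ‖∑ a ∈ A, γ a‖ ^ 2 * (((A'.card : ℝ) ^ 2 * ((X.card : ℝ) ^ 2) ^ k)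
        * (2 * (1/4) ^ k + η)) := by
    intro γ
    have hA' := char_sum_le A' γ
    have hX := char_sum_le X γ
    have h2 : ‖γ y - 1‖ ≤ 2 := by
      refine (norm_sub_le _ _).trans ?_
      rw [AddChar.norm_apply]; norm_num
    have hk : (0 : ℝ) ≤ (1/4) ^ k := by positivity
    rw [norm_mul, Complex.norm_real, Real.norm_of_nonneg (by positivity), mul_assoc]
    refine mul_le_mul_of_nonneg_left ?_ (by positivity)
    by_cases hg : (X.card : ℝ) / 2 ≤ ‖∑ x ∈ X, γ x‖
    · refine mul_le_mul (by gcongr) ?_ (norm_nonneg _) (by positivity)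
      linarith [h γ hg]
    · push Not at hg
      calc _ ≤ (A'.card : ℝ) ^ 2 * (((X.card : ℝ) / 2) ^ 2) ^ k * 2 := by gcongr
        _ = (A'.card : ℝ) ^ 2 * ((X.card : ℝ) ^ 2) ^ k * (2 * (1/4) ^ k) := by
          have : ((X.card : ℝ) / 2) ^ 2 = (X.card : ℝ) ^ 2 * (1/4) := by ring
          rw [this, mul_pow]; ring
        _ ≤ _ := by gcongr; linarith
  have e3 : (Fintype.card G : ℝ) * |QS A A' X k y - QS A A' X k 0|
      ≤ Fintype.card G * (A.card * ((A'.card : ℝ) ^ 2 * ((X.card : ℝ) ^ 2) ^ k)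
        * (2 * (1/4) ^ k + η)) := by
    calc (Fintype.card G : ℝ) * |QS A A' X k y - QS A A' X k 0|
        = ‖((Fintype.card G : ℂ)) * ((QS A A' X k y - QS A A' X k 0 : ℝ) : ℂ)‖ := by
          rw [norm_mul, Complex.norm_real, Real.norm_eq_abs]; simp
      _ ≤ _ := by
          rw [e1]
          refine (norm_sum_le _ _).trans ((sum_le_sum fun γ _ => e2 γ).trans ?_)
          rw [← sum_mul, hpars]
          apply le_of_eq; ring
  exact le_of_mul_le_mul_left e3 hN

end KM

namespace KM
set_option linter.unusedSectionVars false
open scoped Classical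
open Finset
variable {G : Type} [AddCommGroup G] [Fintype G]

lemma cor_ind_nonneg (A : Finset G) (x : G) : 0 ≤ cor (ind A) (ind A) x := by
  unfold cor
  exact sum_nonneg fun y _ => mul_nonneg (ind_nonneg _ _) (ind_nonneg _ _)

lemma sift (A1 D : Finset G) (M α1 b1 : ℝ) (m p0 : ℕ) (hD : D.Nonempty)
    (hα : 0 < α1) (hb : 0 < b1) (hA : (A1.card : ℝ) = α1 * b1) (hM : M = α1 ^ 2 * b1)
    (hm : (1.01 : ℝ) ^ m ≤ 2 ^ p0) (hp0 : (4000 : ℝ) ≤ 2 ^ p0)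
    (hW : 4 ^ p0 * M ^ m * (D.card : ℝ) ^ 2 ≤ ∑ u ∈ D, ∑ v ∈ D, (cor (ind A1) (ind A1) (v - u)) ^ m) :
    ∃ A' ⊆ D, α1 ^ m / 4 * D.card < A'.card ∧
      1000 * ∑ u ∈ A', ∑ v ∈ A', (if cor (ind A1) (ind A1) (v - u) < 1.01 * M then (1:ℝ) else 0)
        ≤ (A'.card : ℝ) ^ 2 := by
  have hMp : 0 < M := by rw [hM]; positivity
  have hDc : (0 : ℝ) < D.card := by exact_mod_cast card_pos.mpr hD
  set c := cor (ind A1) (ind A1) with hc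
  have hc0 : ∀ x, 0 ≤ c x := cor_ind_nonneg A1
  let g : (Fin m → G) → G → ℝ := fun b u => ∏ i, ind A1 (b i + u)
  let bad : G → ℝ := fun x => if c x < 1.01 * M then 1 else 0
  have h1 : ∀ u v, (c (v - u)) ^ m = ∑ b, g b u * g b v := by
    intro u v
    rw [hc, cor_eq, Fintype.sum_pow]
    refine sum_congr rfl fun b _ => ?_
    rw [prod_mul_distrib]
  have h2 : ∑ b, ∑ u ∈ D, g b u = D.card * (A1.card : ℝ) ^ m := by
    rw [sum_comm]
    have : ∀ u, ∑ b, g b u = (A1.card : ℝ) ^ m := by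
      intro u
      have e : (A1.card : ℝ) = ∑ x, ind A1 (x + u) := by
        rw [← sum_ind]
        exact (Fintype.sum_equiv (Equiv.addRight u) _ _ fun x => rfl).symm
      rw [e, Fintype.sum_pow]
    simp [this]
  set W := ∑ u ∈ D, ∑ v ∈ D, (c (v - u)) ^ m with hWd
  have h3 : ∑ b, ∑ u ∈ D, ∑ v ∈ D, g b u * g b v = W := by
    rw [sum_comm]
    refine sum_congr rfl fun u _ => ?_
    rw [sum_comm]
    exact sum_congr rfl fun v _ => (h1 u v).symm
  have h4 : ∑ b, ∑ u ∈ D, ∑ v ∈ D, bad (v - u) * (g b u * g b v) ≤ (1.01 * M) ^ m * (D.card : ℝ) ^ 2 := by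
    rw [sum_comm]
    calc _ ≤ ∑ u ∈ D, ∑ v ∈ D, (1.01 * M) ^ m := by
          refine sum_le_sum fun u _ => ?_
          rw [sum_comm]
          refine sum_le_sum fun v _ => ?_
          rw [← mul_sum, ← h1]
          simp only [bad]
          split_ifs with h
          · rw [one_mul]; exact pow_le_pow_left₀ (hc0 _) h.le _
          · rw [zero_mul]; positivity
      _ = _ := by simp; ring
  have hWp : 0 < W := lt_of_lt_of_le (by positivity) hW
  have hpos : 0 < ∑ b, ((∑ u ∈ D, ∑ v ∈ D, g b u * g b v) - α1 ^ m / 4 * D.card * ∑ u ∈ D, g b u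
      - 1000 * ∑ u ∈ D, ∑ v ∈ D, bad (v - u) * (g b u * g b v)) := by
    rw [sum_sub_distrib, sum_sub_distrib, ← mul_sum, ← mul_sum, h2, h3]
    have e1 : α1 ^ m / 4 * D.card * (D.card * (A1.card : ℝ) ^ m) = (M ^ m * (D.card : ℝ) ^ 2) / 4 := by
      rw [hA, hM]; ring
    have e2 : (1 : ℝ) ≤ 4 ^ p0 := one_le_pow₀ (by norm_num)
    have e3 : M ^ m * (D.card : ℝ) ^ 2 ≤ W := by
      refine le_trans ?_ hW
      have : 0 < M ^ m * (D.card : ℝ) ^ 2 := by positivity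
      nlinarith
    have e4 : 4000 * ((1.01 * M) ^ m * (D.card : ℝ) ^ 2) ≤ W := by
      refine le_trans ?_ hW
      rw [mul_pow]
      have : (4 : ℝ) ^ p0 = 2 ^ p0 * 2 ^ p0 := by rw [← mul_pow]; norm_num
      rw [this]
      calc _ = 4000 * 1.01 ^ m * M ^ m * (D.card : ℝ) ^ 2 := by ring
        _ ≤ _ := by gcongr
    rw [e1]; linarith
  obtain ⟨b, hb'⟩ : ∃ b, 0 < ((∑ u ∈ D, ∑ v ∈ D, g b u * g b v) - α1 ^ m / 4 * D.card * ∑ u ∈ D, g b u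
      - 1000 * ∑ u ∈ D, ∑ v ∈ D, bad (v - u) * (g b u * g b v)) := by
    by_contra hcon
    push Not at hcon
    exact absurd hpos (not_lt.mpr (sum_nonpos fun b _ => hcon b))
  have hg01 : ∀ u, g b u = 0 ∨ g b u = 1 := by
    intro u
    by_cases h : ∀ i, b i + u ∈ A1
    · right; simp [g, ind, h]
    · left; push Not at h; obtain ⟨i, hi⟩ := h
      exact prod_eq_zero (mem_univ i) (by simp [ind, hi])
  let A' := D.filter fun u => g b u = 1
  have s1 : ∀ F : G → ℝ, ∑ u ∈ D, g b u * F u = ∑ u ∈ A', F u := by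
    intro F
    rw [sum_filter]
    refine sum_congr rfl fun u _ => ?_
    rcases hg01 u with h | h <;> simp [h]
  have s2 : ∑ u ∈ D, g b u = A'.card := by
    have := s1 (fun _ => 1); simpa using this
  have s3 : ∑ u ∈ D, ∑ v ∈ D, g b u * g b v = (A'.card : ℝ) ^ 2 := by
    rw [← sum_mul_sum, s2]; ring
  have s4 : ∑ u ∈ D, ∑ v ∈ D, bad (v - u) * (g b u * g b v) = ∑ u ∈ A', ∑ v ∈ A', bad (v - u) := by
    rw [← s1]
    refine sum_congr rfl fun u _ => ?_
    rw [← s1, mul_sum]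
    exact sum_congr rfl fun v _ => by ring
  rw [s2, s3, s4] at hb'
  have hbadn : 0 ≤ ∑ u ∈ A', ∑ v ∈ A', bad (v - u) :=
    sum_nonneg fun _ _ => sum_nonneg fun _ _ => by simp only [bad]; split_ifs <;> norm_num
  have hκ : 0 < α1 ^ m / 4 * D.card := by positivity
  have hA'0 : (0 : ℝ) ≤ A'.card := by positivity
  refine ⟨A', filter_subset _ _, ?_, ?_⟩
  · by_contra hcon
    push Not at hcon
    nlinarith
  · have : 0 ≤ α1 ^ m / 4 * D.card * A'.card := by positivity
    simp only [bad] at *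
    linarith

lemma unbalance (D : Finset G) (f c : G → ℝ) (M : ℝ) (p0 : ℕ) (hp : 1 ≤ p0) (hM : 0 < M)
    (hc0 : ∀ x, 0 ≤ c x)
    (hbal : ∀ u ∈ D, ∀ v ∈ D, |cor f f (v - u) - (c (v - u) - M)| ≤ M / 100)
    (hlow : (D.card : ℝ) ^ 2 * (M / 8) ^ (4 * p0) ≤ ∑ u ∈ D, ∑ v ∈ D, (cor f f (v - u)) ^ (4 * p0)) :
    4 ^ p0 * M ^ (68 * p0) * (D.card : ℝ) ^ 2 ≤ ∑ u ∈ D, ∑ v ∈ D, (c (v - u)) ^ (68 * p0) := by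
  set p := 4 * p0 with hpd
  set m := 68 * p0 with hmd
  have hmp : m = 17 * p := by omega
  have hchoose : (16 : ℝ) ^ p ≤ (m.choose p : ℝ) := by
    have h1 := Nat.pow_le_choose p m (α := ℝ)
    refine le_trans ?_ h1
    rw [le_div_iff₀ (by positivity)]
    have h2 : (p.factorial : ℝ) ≤ (p : ℝ) ^ p := by exact_mod_cast Nat.factorial_le_pow p
    have h3 : (16 * (p : ℝ)) ≤ ((m + 1 - p : ℕ) : ℝ) := by
      have : 16 * p ≤ m + 1 - p := by omega
      exact_mod_cast this
    calc (16 : ℝ) ^ p * p.factorial ≤ 16 ^ p * (p : ℝ) ^ p := by gcongr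
      _ = (16 * (p : ℝ)) ^ p := by rw [mul_pow]
      _ ≤ _ := by gcongr
  have h1 : (2 : ℝ) ^ p * M ^ m * (D.card : ℝ) ^ 2 ≤ ∑ u ∈ D, ∑ v ∈ D, (cor f f (v - u) + M) ^ m := by
    have e1 : ∑ u ∈ D, ∑ v ∈ D, (cor f f (v - u) + M) ^ m
        = ∑ j ∈ range (m + 1), M ^ (m - j) * (m.choose j) * ∑ u ∈ D, ∑ v ∈ D, (cor f f (v - u)) ^ j := by
      simp_rw [add_pow, mul_sum]
      rw [sum_congr rfl fun u _ => sum_comm, sum_comm]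
      refine sum_congr rfl fun j _ => sum_congr rfl fun u _ => sum_congr rfl fun v _ => ?_
      ring
    rw [e1]
    have e2 := single_le_sum (f := fun j => M ^ (m - j) * (m.choose j) * ∑ u ∈ D, ∑ v ∈ D, (cor f f (v - u)) ^ j)
      (s := range (m+1)) (fun j _ => mul_nonneg (by positivity) (cor_pow_nonneg f D j))
      (mem_range.mpr (by omega : p < m + 1))
    refine le_trans ?_ e2
    calc (2 : ℝ) ^ p * M ^ m * (D.card : ℝ) ^ 2
        = M ^ (m - p) * 16 ^ p * ((D.card : ℝ) ^ 2 * (M / 8) ^ p) := by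
          have t1 : M ^ m = M ^ (m - p) * M ^ p := by rw [← pow_add]; congr 1; omega
          have t2 : (16 : ℝ) ^ p * (M / 8) ^ p = 2 ^ p * M ^ p := by
            rw [← mul_pow, ← mul_pow]; congr 1; ring
          rw [t1]
          linear_combination (-(M ^ (m - p) * (D.card : ℝ) ^ 2)) * t2
      _ ≤ _ := by gcongr
  have h2 : ∑ u ∈ D, ∑ v ∈ D, (cor f f (v - u) + M) ^ m
      ≤ ∑ u ∈ D, ∑ v ∈ D, 2 ^ p0 * ((c (v - u)) ^ m + M ^ m) := by
    refine sum_le_sum fun u hu => sum_le_sum fun v hv => ?_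
    have a1 := abs_le.mp (hbal u hu v hv)
    have a0 := hc0 (v - u)
    set t := c (v - u)
    have a2 : |cor f f (v - u) + M| ≤ t + M / 100 := abs_le.mpr ⟨by linarith, by linarith⟩
    have a3 : t + M / 100 ≤ 1.01 * max t M := by
      rcases le_total t M with h | h
      · rw [max_eq_right h]; linarith
      · rw [max_eq_left h]; linarith
    have hmax : 0 ≤ max t M := le_max_of_le_left a0
    calc (cor f f (v - u) + M) ^ m ≤ |cor f f (v - u) + M| ^ m := by
          rw [← abs_pow]; exact le_abs_self _
      _ ≤ (1.01 * max t M) ^ m := pow_le_pow_left₀ (abs_nonneg _) (a2.trans a3) _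
      _ = (1.01 ^ 68) ^ p0 * (max t M) ^ m := by rw [mul_pow, hmd, pow_mul]
      _ ≤ 2 ^ p0 * (t ^ m + M ^ m) := by
          have b1 : ((1.01 : ℝ) ^ 68) ^ p0 ≤ 2 ^ p0 := by gcongr; norm_num
          have b2 : (max t M) ^ m ≤ t ^ m + M ^ m := by
            rcases le_total t M with h | h
            · rw [max_eq_right h]; have : 0 ≤ t ^ m := by positivity
              linarith
            · rw [max_eq_left h]; have : 0 ≤ M ^ m := by positivity
              linarith
          gcongr
  have h3 : ∑ u ∈ D, ∑ v ∈ D, (2 : ℝ) ^ p0 * ((c (v - u)) ^ m + M ^ m)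
      = 2 ^ p0 * (∑ u ∈ D, ∑ v ∈ D, (c (v - u)) ^ m + M ^ m * (D.card : ℝ) ^ 2) := by
    simp_rw [← mul_sum, sum_add_distrib]; simp; ring
  rw [h3] at h2
  have h4 := h1.trans h2
  have e : (2 : ℝ) ^ p = 2 ^ p0 * 8 ^ p0 := by
    rw [hpd, pow_mul, ← mul_pow]; norm_num
  rw [e, mul_assoc, mul_assoc] at h4
  have h5 := le_of_mul_le_mul_left h4 (by positivity)
  have e8 : (4 : ℝ) ^ p0 + 1 ≤ 8 ^ p0 := by
    have : (8 : ℝ) ^ p0 = 4 ^ p0 * 2 ^ p0 := by rw [← mul_pow]; norm_num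
    rw [this]
    have a : (2 : ℝ) ≤ 2 ^ p0 := le_self_pow₀ (by norm_num) (by omega)
    have b : (1 : ℝ) ≤ 4 ^ p0 := one_le_pow₀ (by norm_num)
    nlinarith
  have h6 : 0 ≤ M ^ m * (D.card : ℝ) ^ 2 := by positivity
  nlinarith

lemma cnv_low (f c : G → ℝ) (D A2 B2p : Finset G) (M : ℝ) (p : ℕ) (hp : Even p) (hM : 0 < M)
    (hA2 : A2.Nonempty)
    (hfew : ∑ y ∈ A2, c (y + y) ≤ M / 2 * A2.card)
    (hbal : ∀ y ∈ A2, |cnv f f (y + y) - (c (y + y) - M)| ≤ M / 100)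
    (hD : ∀ u ∈ D, ∀ v ∈ D, ∃ h, h + h = v - u ∧ ∀ b ∈ A2, b - h ∈ B2p)
    (hB2 : 2 * (B2p.card : ℝ) ≤ 2 ^ (p + 1) * A2.card) :
    (D.card : ℝ) ^ 2 * (M / 8) ^ p ≤ ∑ u ∈ D, ∑ v ∈ D, (cor f f (v - u)) ^ p := by
  have hA2c : (0 : ℝ) < A2.card := by exact_mod_cast card_pos.mpr hA2
  have h1 : A2.card * (M / 4) ^ p ≤ ∑ y ∈ A2, (cnv f f (y + y)) ^ p := by
    have e1 : ∑ y ∈ A2, cnv f f (y + y) ≤ - (M / 4) * A2.card := by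
      calc _ ≤ ∑ y ∈ A2, (c (y + y) - M + M / 100) :=
            sum_le_sum fun y hy => by linarith [(abs_le.mp (hbal y hy)).2]
        _ = ∑ y ∈ A2, c (y + y) - M * A2.card + M / 100 * A2.card := by
            rw [sum_add_distrib, sum_sub_distrib]; simp; ring
        _ ≤ _ := by nlinarith
    have e2 := Real.pow_arith_mean_le_arith_mean_pow_of_even A2 (fun _ => 1 / (A2.card : ℝ))
      (fun y => cnv f f (y + y)) (fun _ _ => by positivity) (by simp; field_simp) hp
    rw [← mul_sum, ← mul_sum] at e2
    have e3 : (M / 4) ^ p ≤ (1 / (A2.card : ℝ) * ∑ y ∈ A2, cnv f f (y + y)) ^ p := by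
      rw [← hp.neg_pow (1 / (A2.card : ℝ) * ∑ y ∈ A2, cnv f f (y + y))]
      refine pow_le_pow_left₀ (by positivity) ?_ _
      rw [← mul_neg, one_div, ← div_eq_inv_mul, le_div_iff₀ hA2c]; linarith
    have e4 := e3.trans e2
    rw [one_div, ← div_eq_inv_mul, le_div_iff₀ hA2c] at e4
    linarith
  set Z := ∑ u ∈ D, ∑ v ∈ D, (cor f f (v - u)) ^ p
  have h2 : ∑ y ∈ B2p, ∑ u ∈ D, ∑ v ∈ D, (cnv f f (v - u + (y + y))) ^ p ≤ B2p.card * Z := by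
    calc _ ≤ ∑ y ∈ B2p, Z := sum_le_sum fun y _ => cnv_pow_le f D p _
      _ = _ := by simp
  have h3 : (D.card : ℝ) ^ 2 * (A2.card * (M / 4) ^ p)
      ≤ ∑ y ∈ B2p, ∑ u ∈ D, ∑ v ∈ D, (cnv f f (v - u + (y + y))) ^ p := by
    rw [sum_comm]
    have : (D.card : ℝ) ^ 2 * (A2.card * (M / 4) ^ p) = ∑ u ∈ D, ∑ v ∈ D, (A2.card * (M / 4) ^ p) := by
      simp; ring
    rw [this]
    refine sum_le_sum fun u hu => ?_
    rw [sum_comm]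
    refine sum_le_sum fun v hv => ?_
    obtain ⟨h, hh, hb⟩ := hD u hu v hv
    refine h1.trans ?_
    have e1 : ∑ y ∈ A2, (cnv f f (y + y)) ^ p
        = ∑ y ∈ A2.image (fun b => b - h), (cnv f f (v - u + (y + y))) ^ p := by
      rw [sum_image (fun a _ b _ h' => sub_left_injective h')]
      refine sum_congr rfl fun y _ => ?_
      have : h + h + (y - h + (y - h)) = y + y := by abel
      rw [← hh, this]
    rw [e1]
    refine sum_le_sum_of_subset_of_nonneg ?_ fun _ _ _ => hp.pow_nonneg _
    intro y hy
    obtain ⟨b, hb', rfl⟩ := mem_image.mp hy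
    exact hb b hb'
  have hZ : 0 ≤ Z := cor_pow_nonneg f D p
  have h4 := h3.trans h2
  have h5 : (B2p.card : ℝ) * Z ≤ 2 ^ p * A2.card * Z := by
    gcongr
    rw [pow_succ] at hB2; linarith
  have h6 : A2.card * 2 ^ p * ((D.card : ℝ) ^ 2 * (M / 8) ^ p) ≤ A2.card * 2 ^ p * Z := by
    have : (M / 4) ^ p = 2 ^ p * (M / 8) ^ p := by rw [← mul_pow]; congr 1; ring
    rw [this] at h4
    linarith
  exact le_of_mul_le_mul_left h6 (by positivity)

end KM

namespace KM
set_option linter.unusedSectionVars false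
open scoped Classical
open Finset
variable {G : Type} [AddCommGroup G] [Fintype G]

lemma chain (A' S Ω E X : Finset G) (δ : ℝ) (k : ℕ) (hA' : A'.Nonempty) (hXE : X ⊆ E)
    (hper : ∀ e ∈ X, ∀ e' ∈ X, (((Ω.filter fun x => x + (e - e') ∈ Ω ∧
      2 * δ < |gg A' S (x + (e - e')) - gg A' S x|).card : ℕ) : ℝ) ≤ 2 * δ * A'.card)
    (hΩ : ∀ j ≤ k, ∀ f f' : Fin j → G, (∀ i, f i ∈ E) → (∀ i, f' i ∈ E) → ∀ v ∈ A',
      v + (∑ i, f i - ∑ i, f' i) ∈ Ω) (hδ : 0 ≤ δ) :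
    ∀ j ≤ k, ∀ f f' : Fin j → G, (∀ i, f i ∈ X) → (∀ i, f' i ∈ X) →
      ∑ v ∈ A', gg A' S v - 4 * δ * j * A'.card ≤ ∑ v ∈ A', gg A' S (v + (∑ i, f i - ∑ i, f' i)) := by
  intro j
  induction j with
  | zero => intro _ f f' _ _; simp
  | succ j ih =>
    intro hj f f' hf hf'
    have h1 := ih (by omega) (fun i => f i.castSucc) (fun i => f' i.castSucc)
      (fun i => hf _) (fun i => hf' _)
    have o1 := hΩ j (by omega) (fun i => f i.castSucc) (fun i => f' i.castSucc)
      (fun i => hXE (hf _)) (fun i => hXE (hf' _))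
    have o2 := hΩ (j+1) hj f f' (fun i => hXE (hf _)) (fun i => hXE (hf' _))
    rw [Fin.sum_univ_castSucc, Fin.sum_univ_castSucc (f := f')] at o2 ⊢
    set z := ∑ i : Fin j, f i.castSucc - ∑ i : Fin j, f' i.castSucc with hz
    set e := f (Fin.last j)
    set e' := f' (Fin.last j)
    have hre : ∀ v, v + (∑ i : Fin j, f i.castSucc + e - (∑ i : Fin j, f' i.castSucc + e'))
        = v + z + (e - e') := by intro v; rw [hz]; abel
    simp only [hre] at o2 ⊢
    have hp := hper e (hf _) e' (hf' _)
    set bad := Ω.filter fun x => x + (e - e') ∈ Ω ∧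
      2 * δ < |gg A' S (x + (e - e')) - gg A' S x| with hbad
    have key : ∀ v ∈ A', gg A' S (v + z) - gg A' S (v + z + (e - e'))
        ≤ 2 * δ + (if v + z ∈ bad then 1 else 0) := by
      intro v hv
      split_ifs with hb
      · linarith [gg_le_one A' S (v + z), gg_nonneg A' S (v + z + (e - e'))]
      · have : |gg A' S (v + z + (e - e')) - gg A' S (v + z)| ≤ 2 * δ := by
          by_contra hcon
          push Not at hcon
          exact hb (mem_filter.mpr ⟨o1 v hv, o2 v hv, hcon⟩)
        linarith [(abs_le.mp this).1]
    have h2 := sum_le_sum key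
    rw [sum_sub_distrib, sum_add_distrib] at h2
    have h3 : ∑ v ∈ A', (if v + z ∈ bad then (1:ℝ) else 0) ≤ 2 * δ * A'.card := by
      refine le_trans ?_ hp
      rw [← sum_filter, sum_const, nsmul_eq_mul, mul_one]
      have : (A'.filter fun v => v + z ∈ bad).card ≤ bad.card :=
        card_le_card_of_injOn (fun v => v + z) (fun v hv => (mem_filter.mp hv).2)
          (fun a _ b _ h => add_left_injective z h)
      exact_mod_cast this
    simp only [sum_const, nsmul_eq_mul] at h2
    push_cast
    linarith

lemma shift_big (A1 A' S Ω E X : Finset G) (M : ℝ) (k : ℕ) (hA' : A'.Nonempty) (hXE : X ⊆ E)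
    (hM : 0 ≤ M) (hk : 0 < k)
    (hS : S = univ.filter fun x => ¬ cor (ind A1) (ind A1) x < 1.01 * M)
    (hbadc : 1000 * ∑ u ∈ A', ∑ v ∈ A', (if cor (ind A1) (ind A1) (v - u) < 1.01 * M then (1:ℝ) else 0)
        ≤ (A'.card : ℝ) ^ 2)
    (hper : ∀ e ∈ X, ∀ e' ∈ X, (((Ω.filter fun x => x + (e - e') ∈ Ω ∧
      2 * (1 / (4000 * k : ℝ)) < |gg A' S (x + (e - e')) - gg A' S x|).card : ℕ) : ℝ)
        ≤ 2 * (1 / (4000 * k : ℝ)) * A'.card)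
    (hΩ : ∀ j ≤ k, ∀ f f' : Fin j → G, (∀ i, f i ∈ E) → (∀ i, f' i ∈ E) → ∀ v ∈ A',
      v + (∑ i, f i - ∑ i, f' i) ∈ Ω)
    (f f' : Fin k → G) (hf : ∀ i, f i ∈ X) (hf' : ∀ i, f' i ∈ X) :
    1.007 * M * (A'.card : ℝ) ^ 2
      ≤ ∑ u ∈ A', ∑ v ∈ A', cor (ind A1) (ind A1) (v - u + (∑ i, f i - ∑ i, f' i)) := by
  have hAc : (0 : ℝ) < A'.card := by exact_mod_cast card_pos.mpr hA'
  have hkr : (0 : ℝ) < k := by exact_mod_cast hk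
  have hch := chain A' S Ω E X _ k hA' hXE hper hΩ (by positivity) k le_rfl f f' hf hf'
  set z := ∑ i, f i - ∑ i, f' i
  set c := cor (ind A1) (ind A1)
  have hc0 : ∀ x, 0 ≤ c x := cor_ind_nonneg A1
  have hi : ∀ x, ind S x = 1 - (if c x < 1.01 * M then (1:ℝ) else 0) := by
    intro x; rw [hS]; unfold ind; by_cases h : c x < 1.01 * M <;> simp [h]
  have h0 : ∀ t : G, A'.card * ∑ v ∈ A', gg A' S (v + t) = ∑ u ∈ A', ∑ v ∈ A', ind S (v - u + t) := by
    intro t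
    unfold gg
    rw [mul_sum, sum_comm]
    refine sum_congr rfl fun v _ => ?_
    rw [mul_div_cancel₀ _ hAc.ne']
    refine sum_congr rfl fun u _ => ?_
    congr 1; abel
  have h1 := h0 0
  have h2 := h0 z
  simp only [add_zero] at h1
  have h3 : ∑ u ∈ A', ∑ v ∈ A', ind S (v - u) ≥ 0.999 * (A'.card : ℝ) ^ 2 := by
    simp only [hi, sum_sub_distrib]
    simp only [sum_const, nsmul_eq_mul, mul_one]
    nlinarith
  have h4 : ∑ u ∈ A', ∑ v ∈ A', ind S (v - u + z) ≥ 0.998 * (A'.card : ℝ) ^ 2 := by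
    rw [← h2]
    have e : 4 * (1 / (4000 * k : ℝ)) * k * A'.card = 0.001 * A'.card := by field_simp; norm_num
    rw [e] at hch
    have := mul_le_mul_of_nonneg_left hch hAc.le
    rw [mul_sub, h1] at this
    nlinarith
  have h5 : ∑ u ∈ A', ∑ v ∈ A', (1.01 * M) * ind S (v - u + z) ≤ ∑ u ∈ A', ∑ v ∈ A', c (v - u + z) := by
    refine sum_le_sum fun u _ => sum_le_sum fun v _ => ?_
    rw [hi]
    split_ifs with h
    · simpa using hc0 _
    · push Not at h; simpa using h
  refine le_trans ?_ h5
  simp_rw [← mul_sum]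
  nlinarith

lemma increment_w (A1 A' X : Finset G) (M α1 b1 : ℝ) (k : ℕ) (w : G → ℝ) (hw : ∀ z, 0 ≤ w z)
    (hA' : A'.Nonempty) (hX : X.Nonempty)
    (hα : 0 < α1) (hb : 0 < b1) (hA : (A1.card : ℝ) = α1 * b1) (hM : M = α1 ^ 2 * b1)
    (hbig : ∀ f f' : Fin k → G, (∀ i, f i ∈ X) → (∀ i, f' i ∈ X) →
      1.007 * M * (A'.card : ℝ) ^ 2
      ≤ ∑ u ∈ A', ∑ v ∈ A', cor (ind A1) (ind A1) (v - u + (∑ i, f i - ∑ i, f' i)))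
    {η : ℝ} (hη : 0 ≤ η) (hηk : 2 * (1/4) ^ k + η ≤ 0.002 * α1)
    (hsp : ∀ y, w y ≠ 0 → ∀ γ : AddChar G ℂ, (X.card : ℝ) / 2 ≤ ‖∑ x ∈ X, γ x‖ → ‖γ y - 1‖ ≤ η) :
    ∃ x, 1.005 * α1 * ∑ y, w y ≤ ∑ y, w y * ind A1 (x + y) := by
  have hAc : (0 : ℝ) < A'.card := by exact_mod_cast card_pos.mpr hA'
  have hXc : (0 : ℝ) < X.card := by exact_mod_cast card_pos.mpr hX
  have hMp : 0 < M := by rw [hM]; positivity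
  set PX := Fintype.piFinset (fun _ : Fin k => X) with hPX
  have hPXc : (PX.card : ℝ) = (X.card : ℝ) ^ k := by simp [PX, Fintype.card_piFinset]
  set T : ℝ := (A'.card : ℝ) ^ 2 * ((X.card : ℝ) ^ 2) ^ k with hT
  have hTp : 0 < T := by positivity
  have hQ0 : 1.007 * M * T ≤ QS A1 A' X k 0 := by
    have e : QS A1 A' X k 0 = ∑ e ∈ PX, ∑ e' ∈ PX, ∑ u ∈ A', ∑ v ∈ A',
        cor (ind A1) (ind A1) (v - u + (∑ i, e i - ∑ i, e' i)) := by
      unfold QS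
      simp only [add_zero]
      rw [sum_congr rfl fun u _ => sum_comm, sum_comm]
      refine sum_congr rfl fun e _ => ?_
      rw [sum_congr rfl fun u _ => sum_comm, sum_comm]
    rw [e]
    calc 1.007 * M * T = ∑ e ∈ PX, ∑ e' ∈ PX, 1.007 * M * (A'.card : ℝ) ^ 2 := by
          simp only [sum_const, nsmul_eq_mul, hPXc, hT]; rw [← pow_mul, mul_comm 2 k, pow_mul]; ring
      _ ≤ _ := sum_le_sum fun e he => sum_le_sum fun e' he' =>
          hbig e e' (Fintype.mem_piFinset.mp he) (Fintype.mem_piFinset.mp he')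
  have hQ : ∀ y, w y ≠ 0 → 1.005 * M * T ≤ QS A1 A' X k y := by
    intro y hy
    have h1 := QS_close A1 A' X k y hη (hsp y hy)
    have h2 : A1.card * ((A'.card : ℝ) ^ 2 * ((X.card : ℝ) ^ 2) ^ k) * (2 * (1/4) ^ k + η)
        ≤ 0.002 * M * T := by
      calc _ ≤ A1.card * T * (0.002 * α1) := by gcongr
        _ = _ := by rw [hA, hM]; ring
    linarith [(abs_le.mp (h1.trans h2)).1]
  have hsum : 1.005 * M * T * ∑ y, w y ≤ ∑ y, w y * QS A1 A' X k y := by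
    rw [mul_sum]
    refine sum_le_sum fun y _ => ?_
    by_cases hy : w y = 0
    · simp [hy]
    · rw [mul_comm]; exact mul_le_mul_of_nonneg_left (hQ y hy) (hw y)
  by_contra hcon
  push Not at hcon
  have hlt : ∀ x, ∑ y, w y * ind A1 (x + y) ≤ 1.005 * α1 * ∑ y, w y := fun x => (hcon x).le
  by_cases hA1 : A1.Nonempty
  swap
  · rw [not_nonempty_iff_eq_empty] at hA1
    rw [hA1] at hA; simp at hA; rcases hA with h | h <;> linarith
  have hA1c : (0 : ℝ) < A1.card := by exact_mod_cast card_pos.mpr hA1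
  have hPXn : PX.Nonempty := by
    rw [← card_pos]; have : (0:ℝ) < PX.card := by rw [hPXc]; positivity
    exact_mod_cast this
  have heq : ∑ y, w y * QS A1 A' X k y = ∑ u ∈ A', ∑ v ∈ A', ∑ e ∈ PX, ∑ e' ∈ PX, ∑ a ∈ A1,
      ∑ y, w y * ind A1 (a + (v - u + (∑ i, e i - ∑ i, e' i)) + y) := by
    unfold QS
    simp only [cor_ind, mul_sum]
    rw [sum_comm]
    refine sum_congr rfl fun u _ => ?_
    rw [sum_comm]
    refine sum_congr rfl fun v _ => ?_
    rw [sum_comm]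
    refine sum_congr rfl fun e _ => ?_
    rw [sum_comm]
    refine sum_congr rfl fun e' _ => ?_
    rw [sum_comm]
    refine sum_congr rfl fun a _ => sum_congr rfl fun y _ => ?_
    congr 2; abel
  have : ∑ y, w y * QS A1 A' X k y < 1.005 * M * T * ∑ y, w y := by
    rw [heq]
    have e : 1.005 * M * T * ∑ y, w y = ∑ u ∈ A', ∑ v ∈ A', ∑ e ∈ PX, ∑ e' ∈ PX, ∑ a ∈ A1,
        1.005 * α1 * ∑ y, w y := by
      simp only [sum_const, nsmul_eq_mul, hPXc, hT, hA, hM]; rw [← pow_mul, mul_comm 2 k, pow_mul]; ring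
    rw [e]
    refine sum_lt_sum_of_nonempty hA' fun u _ => sum_lt_sum_of_nonempty hA' fun v _ =>
      sum_lt_sum_of_nonempty hPXn fun _ _ => sum_lt_sum_of_nonempty hPXn fun _ _ =>
      sum_lt_sum_of_nonempty hA1 fun _ _ => hcon _
  linarith

end KM

namespace KM
set_option linter.unusedSectionVars false
open scoped Classical
open Finset
variable {G : Type} [AddCommGroup G] [Fintype G]

def nn (P : ℕ) : ℕ := 64000000 * P ^ 2 * (17 + P + 68 * P ^ 2)
def RR (P : ℕ) : ℕ := 8 * (4 + (3 + 68 * P ^ 2) * nn P)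

lemma two_pow_le_exp (a : ℕ) : (2 : ℝ) ^ a ≤ Real.exp a := by
  have h : (2 : ℝ) ≤ Real.exp 1 := by linarith [Real.add_one_le_exp (1:ℝ)]
  calc (2 : ℝ) ^ a ≤ Real.exp 1 ^ a := by gcongr
    _ = _ := by rw [← Real.exp_nat_mul]; simp

lemma K_le (P : ℕ) (α1 : ℝ) (h : (1/2) ^ P ≤ α1) : 8 / α1 ^ (68 * P) ≤ 2 ^ (3 + 68 * P ^ 2) := by
  have h0 : (0 : ℝ) < (1/2) ^ P := by positivity
  have h1 : ((1/2 : ℝ) ^ P) ^ (68 * P) ≤ α1 ^ (68 * P) := by gcongr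
  have h2 : ((1/2 : ℝ) ^ P) ^ (68 * P) = 1 / 2 ^ (68 * P ^ 2) := by
    rw [← pow_mul, one_div, one_div, inv_pow]; congr 2; ring
  rw [h2] at h1
  have h3 : 0 < α1 ^ (68 * P) := lt_of_lt_of_le (by positivity) h1
  rw [div_le_iff₀ h3, pow_add]
  rw [div_le_iff₀ (by positivity)] at h1
  nlinarith

lemma n_bound (P : ℕ) (α1 : ℝ) (hP : 1 ≤ P) (h : (1/2) ^ P ≤ α1) :
    2 * Real.exp (-((1 / (4000 * P : ℝ)) ^ 2 * nn P / 4))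
      ≤ (1 / (4000 * P : ℝ)) / (2 * (8 / α1 ^ (68 * P))) := by
  have hPr : (0 : ℝ) < P := by exact_mod_cast hP
  have h0 : 0 < α1 := lt_of_lt_of_le (by positivity) h
  have e1 : (1 / (4000 * P : ℝ)) ^ 2 * nn P / 4 = ((17 + P + 68 * P ^ 2 : ℕ) : ℝ) := by
    unfold nn; push_cast; field_simp; norm_num
  rw [e1, Real.exp_neg]
  have hK := K_le P α1 h
  set K := 8 / α1 ^ (68 * P) with hKd
  have hKp : 0 < K := by positivity
  have h2 := two_pow_le_exp (17 + P + 68 * P ^ 2)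
  have hP2 : (P : ℝ) ≤ 2 ^ P := by exact_mod_cast Nat.lt_two_pow_self.le
  have h3 : 16000 * K * P ≤ Real.exp ((17 + P + 68 * P ^ 2 : ℕ) : ℝ) := by
    refine le_trans ?_ h2
    calc 16000 * K * P ≤ 2 ^ 14 * 2 ^ (3 + 68 * P ^ 2) * 2 ^ P := by gcongr; norm_num
      _ = _ := by rw [← pow_add, ← pow_add]; congr 1; ring
  rw [← div_eq_mul_inv, div_div, div_le_div_iff₀ (Real.exp_pos _) (by positivity)]
  linarith

lemma R_bound (P : ℕ) (α1 : ℝ) (hP : 1 ≤ P) (h : (1/2) ^ P ≤ α1) :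
    2 * (4 * (8 / α1 ^ (68 * P)) ^ nn P) < Real.exp (RR P / 8) := by
  have h0 : 0 < α1 := lt_of_lt_of_le (by positivity) h
  have hK := K_le P α1 h
  have e : (RR P : ℝ) / 8 = ((4 + (3 + 68 * P ^ 2) * nn P : ℕ) : ℝ) := by
    unfold RR; push_cast; ring
  rw [e]
  refine lt_of_lt_of_le ?_ (two_pow_le_exp _)
  rw [pow_add, pow_mul (2:ℝ) (3 + 68 * P ^ 2)]
  have : (8 / α1 ^ (68 * P)) ^ nn P ≤ (2 ^ (3 + 68 * P ^ 2)) ^ nn P := by gcongr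
  have h2 : (0 : ℝ) < (2 ^ (3 + 68 * P ^ 2)) ^ nn P := by positivity
  linarith

lemma step_core (L : ℕ) (A1 B1 V1 A2 B2 B2p D E Ω E' Ep V5 : Finset G) (α1 δ1 η5 ηl : ℝ)
    (hA1 : A1 ⊆ B1) (hB1 : B1.Nonempty) (hB1s : ∀ x, x ∈ B1 → -x ∈ B1)
    (hα : (A1.card : ℝ) = α1 * B1.card) (hαL : (1/2) ^ (L + 1) ≤ α1) (hα1 : α1 ≤ 1)
    (hV0 : (0 : G) ∈ V1) (hV1s : ∀ x, x ∈ V1 → -x ∈ V1) (hI1 : Inv B1 V1 δ1)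
    (hδ0 : 0 ≤ δ1) (hδ1 : δ1 ≤ α1 / 200)
    (hA2 : A2 ⊆ B2) (hB2 : B2.Nonempty) (hA2c : (1/2) ^ (L + 1) * (B2.card : ℝ) ≤ A2.card)
    (hB2V : ∀ y ∈ B2, y + y ∈ V1)
    (hDn : D.Nonempty)
    (hDV : ∀ u ∈ D, ∀ v ∈ D, v - u ∈ V1)
    (hDh : ∀ u ∈ D, ∀ v ∈ D, ∃ h, h + h = v - u ∧ ∀ b ∈ B2, b - h ∈ B2p)
    (hB2p : (B2p.card : ℝ) ≤ 2 * B2.card)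
    (hfew : ∑ y ∈ A2, cnv (ind A1) (ind A1) (y + y) ≤ (α1 ^ 2 * B1.card) / 2 * A2.card)
    (hEn : E.Nonempty) (hΩc : (Ω.card : ℝ) ≤ 2 * D.card)
    (hDE : ∀ a ∈ D, ∀ e ∈ E, a + e ∈ Ω)
    (hΩ : ∀ j ≤ L + 12, ∀ f f' : Fin j → G, (∀ i, f i ∈ E) → (∀ i, f' i ∈ E) → ∀ v ∈ D,
      v + (∑ i, f i - ∑ i, f' i) ∈ Ω)
    (hE'n : E'.Nonempty) (hEpc : (Ep.card : ℝ) ≤ 2 * E.card)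
    (hEp : ∀ x ∈ E, ∀ f : Fin (RR (L + 12)) → G, (∀ i, f i ∈ E') → x - ∑ i, f i ∈ Ep)
    (hV5 : (0 : G) ∈ V5) (hI5 : Inv E' V5 η5) (hη5 : 0 ≤ η5) (hηl : 0 ≤ ηl)
    (hη : 4 * η5 + RR (L + 12) * ηl ≤ 0.001 * α1) :
    ∃ r ≤ RR (L + 12), ∃ l : Fin r → AddChar G ℂ, ∀ w : G → ℝ, (∀ z, 0 ≤ w z) →
      (∀ z, w z ≠ 0 → z ∈ V5 ∧ -z ∈ V5 ∧ ∀ i, ‖l i z - 1‖ ≤ ηl) →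
      ∃ x, 1.005 * α1 * ∑ y, w y ≤ ∑ y, w y * ind A1 (x + y) := by
  set P := L + 12 with hP
  have hb1 : (0 : ℝ) < B1.card := by exact_mod_cast card_pos.mpr hB1
  have hb2 : (0 : ℝ) < B2.card := by exact_mod_cast card_pos.mpr hB2
  have hDc : (0 : ℝ) < D.card := by exact_mod_cast card_pos.mpr hDn
  have hEc : (0 : ℝ) < E.card := by exact_mod_cast card_pos.mpr hEn
  have hα0 : 0 < α1 := lt_of_lt_of_le (by positivity) hαL
  have hαP : (1/2) ^ P ≤ α1 := le_trans (pow_le_pow_of_le_one (by norm_num) (by norm_num) (by omega)) hαL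
  have hA2p : (0 : ℝ) < A2.card := lt_of_lt_of_le (by positivity) hA2c
  have hA2n : A2.Nonempty := by rw [← card_pos]; exact_mod_cast hA2p
  set M := α1 ^ 2 * (B1.card : ℝ) with hM
  have hMp : 0 < M := by positivity
  set f : G → ℝ := fun z => ind A1 z - α1 * ind B1 z with hf
  have herr : 2 * α1 * δ1 * B1.card ≤ M / 100 := by
    calc 2 * α1 * δ1 * B1.card ≤ 2 * α1 * (α1 / 200) * B1.card := by gcongr
      _ = M / 100 := by rw [hM]; ring
  have hbal1 : ∀ y ∈ A2, |cnv f f (y + y) - (cnv (ind A1) (ind A1) (y + y) - M)| ≤ M / 100 :=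
    fun y hy => (cnv_bal hA1 hI1 hV0 hB1s hα hα0.le hα1 hδ0 (hV1s _ (hB2V y (hA2 hy)))).trans herr
  have hbal2 : ∀ u ∈ D, ∀ v ∈ D, |cor f f (v - u) - (cor (ind A1) (ind A1) (v - u) - M)| ≤ M / 100 :=
    fun u hu v hv => (cor_bal hA1 hI1 hV0 hα hα0.le hα1 hδ0 (hDV u hu v hv)
      (hV1s _ (hDV u hu v hv))).trans herr
  have s1 := cnv_low f (cnv (ind A1) (ind A1)) D A2 B2p M (4 * P)
    (by rw [show 4 * P = 2 * (2 * P) by ring]; exact even_two_mul _) hMp hA2n hfew hbal1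
    (fun u hu v hv => by
      obtain ⟨h, h1, h2⟩ := hDh u hu v hv
      exact ⟨h, h1, fun b hb => h2 b (hA2 hb)⟩)
    (by
      have e1 : (B2.card : ℝ) ≤ 2 ^ (L + 1) * A2.card := by
        have := mul_le_mul_of_nonneg_left hA2c (by positivity : (0:ℝ) ≤ 2 ^ (L + 1))
        rw [← mul_assoc, ← mul_pow] at this
        norm_num at this; linarith
      have e2 : (2 : ℝ) ^ (L + 1) * 4 ≤ 2 ^ (4 * P + 1) := by
        rw [show (4 : ℝ) = 2 ^ 2 by norm_num, ← pow_add]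
        exact pow_le_pow_right₀ (by norm_num) (by omega)
      nlinarith)
  have s2 := unbalance D f (cor (ind A1) (ind A1)) M P (by omega) hMp (cor_ind_nonneg A1) hbal2 s1
  have hP4000 : (4000 : ℝ) ≤ 2 ^ P := by
    calc (4000 : ℝ) ≤ 2 ^ 12 := by norm_num
      _ ≤ _ := pow_le_pow_right₀ (by norm_num) (by omega)
  obtain ⟨A', hA'D, hA'c, hbad⟩ := sift A1 D M α1 B1.card (68 * P) P hDn hα0 hb1 hα hM
    (by rw [pow_mul]; exact pow_le_pow_left₀ (by norm_num) (by norm_num) _) hP4000 s2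
  have hA'p : (0 : ℝ) < A'.card := lt_trans (by positivity) hA'c
  have hA'n : A'.Nonempty := by rw [← card_pos]; exact_mod_cast hA'p
  set K := 8 / α1 ^ (68 * P) with hK
  have hKp : 0 < K := by positivity
  have hΩK : (Ω.card : ℝ) ≤ K * A'.card := by
    refine hΩc.trans ?_
    have : K * (α1 ^ (68 * P) / 4 * D.card) = 2 * D.card := by rw [hK]; field_simp; norm_num
    rw [← this]
    gcongr
  have hPr : (1 : ℝ) ≤ P := by exact_mod_cast (by omega : 1 ≤ P)
  obtain ⟨X, hXE, hXc, hper⟩ := almost_period A' E Ω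
    (univ.filter fun x => ¬ cor (ind A1) (ind A1) x < 1.01 * M) K (1 / (4000 * (P : ℕ) : ℝ)) (nn P) hA'n
    (fun a ha e he => hDE a (hA'D ha) e he) hΩK hKp (by positivity)
    (by rw [div_le_one (by positivity)]; linarith)
    (by unfold nn; positivity) (n_bound P α1 (by omega) hαP)
  have hbig := shift_big A1 A' _ Ω E X M P hA'n hXE hMp.le (by omega) rfl hbad hper
    (fun j hj f f' hf hf' v hv => hΩ j hj f f' hf hf' v (hA'D hv))
  have hXn : X.Nonempty := by
    rw [nonempty_iff_ne_empty]; rintro rfl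
    simp at hXc; rw [hXc] at hEn; exact absurd hEn (by simp)
  have hEpX : (Ep.card : ℝ) ≤ 4 * K ^ nn P * X.card := by linarith
  obtain ⟨r, hr, l, hl⟩ := chang (RR P) X Ep E' (4 * K ^ nn P) hXn hE'n
    (fun x hx => hEp x (hXE hx)) hEpX (R_bound P α1 (by omega) hαP)
  refine ⟨r, hr, l, fun w hw hws => ?_⟩
  have hk4 : 2 * (1/4 : ℝ) ^ P ≤ 0.001 * α1 := by
    have e1 : (1/4 : ℝ) ^ P = (1/2) ^ P * (1/2) ^ P := by rw [← mul_pow]; norm_num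
    have e2 : (1/2 : ℝ) ^ P ≤ (1/2) ^ 12 := pow_le_pow_of_le_one (by norm_num) (by norm_num) (by omega)
    have e3 : (1/2 : ℝ) ^ P * (1/2) ^ P ≤ (1/2) ^ 12 * α1 := by gcongr
    rw [e1]; norm_num at e3 ⊢; linarith
  refine increment_w A1 A' X M α1 B1.card P w hw hA'n hXn hα0 hb1 hα hM hbig
    (η := 0.001 * α1) (by positivity) (by linarith) fun y hy γ hγ => ?_
  obtain ⟨ε, hε, hγ2⟩ := hl γ hγ
  obtain ⟨y1, y2, y3⟩ := hws y hy
  have c1 := spec_inv E' V5 η5 hI5 hV5 hE'n _ hγ2 y1 y2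
  have c2 := char_close γ l ε hε y y3 c1
  have : (r : ℝ) * ηl ≤ RR P * ηl := by gcongr
  linarith

end KM

namespace KM
set_option linter.unusedSectionVars false
open scoped Classical
open Finset
variable {G : Type} [AddCommGroup G] [Fintype G]

noncomputable def T3 (A : Finset G) : ℝ := ∑ x : G, ∑ d : G, ind A x * ind A (x + d) * ind A (x + d + d)

lemma T3_lower (A A1 A2 : Finset G) (x0 : G) (h1 : ∀ b ∈ A1, x0 + b ∈ A) (h2 : ∀ b ∈ A2, x0 + b ∈ A) :
    ∑ y ∈ A2, cnv (ind A1) (ind A1) (y + y) ≤ T3 A := by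
  have hm1 : ∀ b, ind A1 b ≤ ind A (x0 + b) := by
    intro b; unfold ind; split_ifs with a b <;> simp_all
  have hm2 : ∀ b, ind A2 b ≤ ind A (x0 + b) := by
    intro b; unfold ind; split_ifs with a b <;> simp_all
  have e : T3 A = ∑ y, ∑ z, ind A (x0 + z) * ind A (x0 + y) * ind A (x0 + (y + y - z)) := by
    unfold T3
    rw [sum_comm (f := fun y z => ind A (x0 + z) * ind A (x0 + y) * ind A (x0 + (y + y - z)))]
    refine (Fintype.sum_equiv (Equiv.addLeft x0) _ _ fun z => ?_).symm
    refine Fintype.sum_equiv (Equiv.subRight z) _ _ fun y => ?_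
    simp only [Equiv.coe_addLeft, Equiv.subRight_apply]
    have a1 : x0 + z + (y - z) = x0 + y := by abel
    have a2 : x0 + z + (y - z) + (y - z) = x0 + (y + y - z) := by abel
    rw [a2, a1]
  rw [e, ← sum_ind_mul]
  refine sum_le_sum fun y _ => ?_
  unfold cnv
  rw [mul_sum]
  refine sum_le_sum fun z _ => ?_
  calc ind A2 y * (ind A1 z * ind A1 (y + y - z))
      ≤ ind A (x0 + y) * (ind A (x0 + z) * ind A (x0 + (y + y - z))) := by
        have := ind_nonneg A1; have := ind_nonneg A2; have := ind_nonneg A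
        gcongr
        · exact mul_nonneg (by apply ind_nonneg) (by apply ind_nonneg)
        · apply ind_nonneg
        · exact hm2 y
        · apply ind_nonneg
        · apply ind_nonneg
        · exact hm1 z
        · exact hm1 _
    _ = _ := by ring

lemma HD.anti {A : Finset G} {Γ : Finset (AddChar G ℂ)} {s : ℕ} {a a' : ℝ} (h : HD A Γ s a)
    (ha : a' ≤ a) : HD A Γ s a' := by
  intro w hw hw'
  obtain ⟨x, hx⟩ := h w hw hw'
  exact ⟨x, le_trans (mul_le_mul_of_nonneg_right ha (sum_nonneg fun z _ => hw z)) hx⟩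

lemma half_spec (hodd : Odd (Fintype.card G)) :
    ∃ t : ℕ, ∀ x : G, t • x + t • x = x := by
  obtain ⟨t, ht⟩ := hodd
  refine ⟨t + 1, fun x => ?_⟩
  have h := card_nsmul_eq_zero (x := x)
  rw [← add_nsmul]
  have : t + 1 + (t + 1) = Fintype.card G + 1 := by omega
  rw [this, add_nsmul, one_nsmul]
  simp

lemma sub_mem_bohr {Γ : Finset (AddChar G ℂ)} {r s : ℝ} {x y : G} (h : x ∈ bohr Γ r)
    (h' : y ∈ bohr Γ s) : x - y ∈ bohr Γ (r + s) := by
  rw [sub_eq_add_neg]; exact add_mem_bohr h (neg_mem_bohr h')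

lemma sum_mem_bohr {Γ : Finset (AddChar G ℂ)} {r : ℝ} {j : ℕ} (f : Fin j → G)
    (h : ∀ i, f i ∈ bohr Γ r) : ∑ i, f i ∈ bohr Γ (j * r) := by
  induction j with
  | zero => simp [mem_bohr]
  | succ j ih =>
    rw [Fin.sum_univ_castSucc, Nat.cast_succ, add_mul, one_mul]
    exact add_mem_bohr (ih _ fun i => h _) (h _)

lemma half_bohr (t : ℕ) (Γ : Finset (AddChar G ℂ)) (r : ℝ) (x : G)
    (hx : x ∈ bohr (Γ.image fun γ => γ ^ t) r) : t • x ∈ bohr Γ r := by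
  rw [mem_bohr] at *
  intro γ hγ
  have := hx (γ ^ t) (mem_image_of_mem _ hγ)
  rwa [AddChar.pow_apply, ← AddChar.map_nsmul_eq_pow] at this

lemma filter_card (A B : Finset G) (x : G) :
    ∑ b ∈ B, ind A (x + b) = ((B.filter fun b => x + b ∈ A).card : ℝ) := by
  unfold ind; rw [← sum_filter]; simp

lemma hpow (a b : ℕ) (h : a ≤ b) : (1/2 : ℝ) ^ b ≤ (1/2) ^ a :=
  pow_le_pow_of_le_one (by norm_num) (by norm_num) h

lemma nat_half (x q s : ℕ) (h : x ≤ 2 ^ q) : (x : ℝ) * (1/2) ^ (s + q) ≤ (1/2) ^ s := by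
  have h1 : (x : ℝ) ≤ 2 ^ q := by exact_mod_cast h
  calc (x : ℝ) * (1/2) ^ (s + q) ≤ 2 ^ q * (1/2) ^ (s + q) := by gcongr
    _ = _ := by rw [pow_add, mul_comm ((1/2 : ℝ) ^ s), ← mul_assoc, ← mul_pow]; norm_num

lemma bohr_big (Γ : Finset (AddChar G ℂ)) (d s : ℕ) (r : ℝ) (hd : Γ.card ≤ d) (hr : (1/2) ^ s ≤ r) :
    (Fintype.card G : ℝ) * (1/4) ^ (d * (s + 3)) ≤ (bohr Γ r).card := by
  have h1 := bohr_card Γ d s hd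
  have h2 : (bohr Γ ((1/2 : ℝ) ^ s)).card ≤ (bohr Γ r).card := card_le_card (bohr_mono hr)
  have h3 : (Fintype.card G : ℝ) ≤ 4 ^ (d * (s + 3)) * (bohr Γ r).card := by
    exact_mod_cast h1.trans (Nat.mul_le_mul_left _ h2)
  calc _ ≤ 4 ^ (d * (s + 3)) * ((bohr Γ r).card : ℝ) * (1/4) ^ (d * (s + 3)) := by gcongr
    _ = _ := by
      rw [mul_comm ((4:ℝ) ^ (d * (s + 3))), mul_assoc, ← mul_pow]; norm_num

set_option maxHeartbeats 2000000 in
lemma step (hodd : Odd (Fintype.card G)) (A : Finset G) (Γ : Finset (AddChar G ℂ)) (L d s q : ℕ) (a : ℝ)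
    (hd : Γ.card ≤ d) (hdq : d ≤ 2 ^ q) (hsq : s + 13 * q + 4 * L + 66 ≤ 2 ^ q)
    (hRq : RR (L + 12) ≤ 2 ^ q) (hPq : 2 * (L + 12) ≤ 2 ^ q)
    (ha : (1/2) ^ L ≤ a) (hHD : HD A Γ s a) :
    (∃ Γ' : Finset (AddChar G ℂ), Γ'.card ≤ d + RR (L + 12) ∧
      HD A Γ' (s + 13 * q + 4 * L + 62) (1.001 * a)) ∨
    (1/2) ^ (3 * L + 4) * ((Fintype.card G : ℝ) * (1/4) ^ (d * (s + 13 * q + 4 * L + 65))) ^ 2 ≤ T3 A := by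
  obtain ⟨t, ht⟩ := half_spec hodd
  set s6 := s + 13 * q + 4 * L + 62 with hs6
  have ha0 : 0 < a := lt_of_lt_of_le (by positivity) ha
  set Γ2 := Γ.image fun γ => γ ^ t with hΓ2
  have hd2 : Γ2.card ≤ d := card_image_le.trans hd
  -- scales
  set s1 := s + 2 * q + (L + 11) + 2 with hs1
  set s2 := s1 + 1 + 2 * q + (L + 11) + 2 with hs2
  set s3 := s2 + 1 + 2 * q + 0 + 2 with hs3
  set s4 := s3 + q + 2 * q + 0 + 2 with hs4
  set s5 := s4 + q + 2 * q + (L + 15) + 2 with hs5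
  have hs56 : s6 = s5 + q + L + 13 := by omega
  obtain ⟨r1, hr1, hr1', I1⟩ := bohr_reg Γ d s (L + 11) q hd hdq (by omega)
  obtain ⟨r2, hr2, hr2', I2⟩ := bohr_reg Γ d (s1 + 1) (L + 11) q hd hdq (by omega)
  obtain ⟨r3, hr3, hr3', I3⟩ := bohr_reg Γ2 d (s2 + 1) 0 q hd2 hdq (by omega)
  obtain ⟨r4, hr4, hr4', I4⟩ := bohr_reg Γ2 d (s3 + q) 0 q hd2 hdq (by omega)
  obtain ⟨r5, hr5, hr5', I5⟩ := bohr_reg Γ2 d (s4 + q) (L + 15) q hd2 hdq (by omega)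
  rw [← hs1] at I1
  rw [← hs2] at I2
  rw [← hs3] at I3
  rw [← hs4] at I4
  rw [← hs5] at I5
  have p1 : 0 < r1 := lt_of_lt_of_le (by positivity) hr1
  have p2 : 0 < r2 := lt_of_lt_of_le (by positivity) hr2
  have p3 : 0 < r3 := lt_of_lt_of_le (by positivity) hr3
  have p4 : 0 < r4 := lt_of_lt_of_le (by positivity) hr4
  have p5 : 0 < r5 := lt_of_lt_of_le (by positivity) hr5
  have n1 : (bohr Γ r1).Nonempty := ⟨0, zero_mem_bohr _ p1.le⟩
  have n2 : (bohr Γ r2).Nonempty := ⟨0, zero_mem_bohr _ p2.le⟩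
  have n3 : (bohr Γ2 r3).Nonempty := ⟨0, zero_mem_bohr _ p3.le⟩
  have n4 : (bohr Γ2 r4).Nonempty := ⟨0, zero_mem_bohr _ p4.le⟩
  have n5 : (bohr Γ2 r5).Nonempty := ⟨0, zero_mem_bohr _ p5.le⟩
  have c1 : (0 : ℝ) < (bohr Γ r1).card := by exact_mod_cast card_pos.mpr n1
  have c2 : (0 : ℝ) < (bohr Γ r2).card := by exact_mod_cast card_pos.mpr n2
  set B1 := bohr Γ r1 with hB1
  set B2 := bohr Γ r2 with hB2
  set D := bohr Γ2 r3 with hD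
  set E := bohr Γ2 r4 with hE
  set E' := bohr Γ2 r5 with hE'
  have hε : (1/2 : ℝ) ^ (L + 11) ≤ 0.0005 * a := by
    rw [pow_add]; norm_num at ha ⊢; linarith
  -- choose translate
  obtain ⟨x, hx⟩ := hHD (fun z => ind B1 z / B1.card + ind B2 z / B2.card)
    (fun z => add_nonneg (div_nonneg (ind_nonneg _ _) c1.le) (div_nonneg (ind_nonneg _ _) c2.le))
    (fun z hz => by
      by_contra hcon
      apply hz
      have z1 : z ∉ B1 := fun h => hcon (bohr_mono hr1' h)
      have z2 : z ∉ B2 := fun h => hcon (bohr_mono (hr2'.trans (hpow _ _ (by omega))) h)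
      simp [ind, z1, z2])
  have hsumw : ∑ z, (ind B1 z / (B1.card : ℝ) + ind B2 z / B2.card) = 2 := by
    rw [sum_add_distrib, ← sum_div, ← sum_div, sum_ind, sum_ind, div_self c1.ne', div_self c2.ne']
    norm_num
  have hsumw2 : ∑ z, (ind B1 z / (B1.card : ℝ) + ind B2 z / B2.card) * ind A (x + z)
      = (∑ b ∈ B1, ind A (x + b)) / B1.card + (∑ b ∈ B2, ind A (x + b)) / B2.card := by
    rw [← sum_ind_mul B1, ← sum_ind_mul B2, sum_div, sum_div, ← sum_add_distrib]
    refine sum_congr rfl fun z _ => by ring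
  rw [hsumw, hsumw2] at hx
  set α1 := (∑ b ∈ B1, ind A (x + b)) / B1.card with hα1
  set α2 := (∑ b ∈ B2, ind A (x + b)) / B2.card with hα2
  have e1 : α1 * B1.card = ∑ b ∈ B1, ind A (x + b) := by rw [hα1]; field_simp
  have e2 : α2 * B2.card = ∑ b ∈ B2, ind A (x + b) := by rw [hα2]; field_simp
  by_cases g1 : 1.0015 * a ≤ α1
  · left
    refine ⟨Γ, by omega, ?_⟩
    have := HD_of_inv n1 I1 x e1.le
    exact (this.anti (by linarith)).mono subset_rfl (by omega)
  by_cases g2 : 1.0015 * a ≤ α2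
  · left
    refine ⟨Γ, by omega, ?_⟩
    have := HD_of_inv n2 I2 x e2.le
    exact (this.anti (by linarith)).mono subset_rfl (by omega)
  push Not at g1 g2
  have l1 : 0.9985 * a ≤ α1 := by linarith
  have l2 : 0.9985 * a ≤ α2 := by linarith
  have hL1 : (1/2 : ℝ) ^ (L + 1) ≤ 0.9985 * a := by
    rw [pow_succ]; linarith
  set A1 := B1.filter fun b => x + b ∈ A with hA1
  set A2 := B2.filter fun b => x + b ∈ A with hA2
  have k1 : (A1.card : ℝ) = α1 * B1.card := by rw [e1, filter_card]
  have k2 : (A2.card : ℝ) = α2 * B2.card := by rw [e2, filter_card]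
  have hα_le : α1 ≤ 1 := by
    have : (A1.card : ℝ) ≤ B1.card := by exact_mod_cast card_filter_le _ _
    rw [k1] at this
    by_contra hcon; push Not at hcon; nlinarith
  by_cases hfew : ∑ y ∈ A2, cnv (ind A1) (ind A1) (y + y) ≤ (α1 ^ 2 * B1.card) / 2 * A2.card
  swap
  · right
    push Not at hfew
    have h1 := T3_lower A A1 A2 x (fun b hb => (mem_filter.mp hb).2) (fun b hb => (mem_filter.mp hb).2)
    refine le_trans ?_ (hfew.le.trans h1)
    have b1 := bohr_big Γ d s6 r1 hd ((hpow _ _ (by omega)).trans hr1)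
    have b2 := bohr_big Γ d s6 r2 hd ((hpow _ _ (by omega)).trans hr2)
    rw [show s6 + 3 = s + 13 * q + 4 * L + 65 by omega] at b1 b2
    set NB := (Fintype.card G : ℝ) * (1/4) ^ (d * (s + 13 * q + 4 * L + 65))
    have hNB : 0 ≤ NB := by positivity
    rw [k2]
    have m1 : (1/2 : ℝ) ^ (L + 1) ≤ α1 := hL1.trans l1
    have m2 : (1/2 : ℝ) ^ (L + 1) ≤ α2 := hL1.trans l2
    calc (1/2 : ℝ) ^ (3 * L + 4) * NB ^ 2
        = (((1/2) ^ (L + 1)) ^ 2 * NB) / 2 * ((1/2) ^ (L + 1) * NB) := by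
          rw [show 3 * L + 4 = (L + 1) + (L + 1) + (L + 1) + 1 by ring]
          rw [pow_succ _ (L + 1 + (L + 1) + (L + 1)), pow_add _ (L + 1 + (L + 1)), pow_add _ (L+1) (L+1)]; ring
      _ ≤ _ := by
          have hα20 : 0 ≤ α2 := le_trans (by positivity) m2
          have hα10 : 0 ≤ α1 := le_trans (by positivity) m1
          gcongr
  -- the main case
  left
  obtain ⟨B2p, hB2p, hB2pc⟩ := I2
  obtain ⟨Ω, hΩ, hΩc⟩ := I3
  obtain ⟨Ep, hEp, hEpc⟩ := I4
  have hdouble : ∀ z r, z ∈ bohr Γ2 r → z ∈ bohr Γ (r + r) := by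
    intro z r hz
    have := half_bohr t Γ r z hz
    rw [← ht z]; exact add_mem_bohr this this
  have hDD : ∀ u ∈ D, ∀ v ∈ D, v - u ∈ bohr Γ2 ((1/2) ^ s2) := by
    intro u hu v hv
    refine bohr_mono ?_ (sub_mem_bohr hv hu)
    have : (1/2 : ℝ) ^ (s2 + 1) = (1/2) ^ s2 * (1/2) := pow_succ _ _
    linarith
  obtain ⟨r, hr, l, hl⟩ := step_core L A1 B1 (bohr Γ ((1/2) ^ s1)) A2 B2 B2p D E Ω E' Ep
    (bohr Γ2 ((1/2) ^ s5)) α1 ((1/2) ^ (L + 11)) ((1/2) ^ (L + 15)) ((1/2) ^ (L + 13 + q))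
    (filter_subset _ _) n1 (fun _ => neg_mem_bohr) k1 (hL1.trans l1) hα_le
    (zero_mem_bohr _ (by positivity)) (fun _ => neg_mem_bohr) I1 (by positivity)
    (by
      have : (1/2 : ℝ) ^ (L + 11) = (1/2) ^ (L + 1) * (1/2) ^ 10 := by rw [← pow_add]
      rw [this]; norm_num at hL1 ⊢; linarith)
    (filter_subset _ _) n2
    (by rw [k2]; exact mul_le_mul_of_nonneg_right (hL1.trans l2) c2.le)
    (fun y hy => by
      refine bohr_mono ?_ (add_mem_bohr hy hy)
      have : (1/2 : ℝ) ^ (s1 + 1) = (1/2) ^ s1 * (1/2) := pow_succ _ _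
      linarith)
    n3
    (fun u hu v hv => by
      refine bohr_mono ?_ (hdouble _ _ (hDD u hu v hv))
      have h1 : (1/2 : ℝ) ^ s2 ≤ (1/2) ^ (s1 + 1) := hpow _ _ (by omega)
      have : (1/2 : ℝ) ^ (s1 + 1) = (1/2) ^ s1 * (1/2) := pow_succ _ _
      linarith)
    (fun u hu v hv => by
      refine ⟨t • (v - u), ht _, fun b hb => ?_⟩
      rw [sub_eq_add_neg]
      exact hB2p b hb _ (neg_mem_bohr (half_bohr t Γ _ _ (hDD u hu v hv))))
    (hB2pc.trans (by
      have : (1/2 : ℝ) ^ (L + 11) ≤ 1 := pow_le_one₀ (by norm_num) (by norm_num)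
      nlinarith))
    hfew n4
    (hΩc.trans (by norm_num))
    (fun v hv e he => hΩ v hv e (bohr_mono (hr4'.trans (hpow _ _ (by omega))) he))
    (fun j hj f f' hf hf' v hv => by
      refine hΩ v hv _ (bohr_mono ?_ (sub_mem_bohr (sum_mem_bohr f hf) (sum_mem_bohr f' hf')))
      have h1 : 2 * j ≤ 2 ^ q := by omega
      have h2 := nat_half (2 * j) q s3 h1
      push_cast at h2
      have h3 : (j : ℝ) * r4 ≤ j * (1/2) ^ (s3 + q) := by gcongr
      linarith)
    n5
    (hEpc.trans (by norm_num))
    (fun y hy f hf => by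
      rw [sub_eq_add_neg]
      refine hEp y hy _ (neg_mem_bohr (bohr_mono ?_ (sum_mem_bohr f hf)))
      refine le_trans ?_ (nat_half _ q s4 hRq)
      gcongr)
    (zero_mem_bohr _ (by positivity)) I5 (by positivity) (by positivity)
    (by
      have h1 := nat_half _ q (L + 13) hRq
      have h2 : (1/2 : ℝ) ^ (L + 13) = (1/2) ^ (L + 1) * (1/2) ^ 12 := by rw [← pow_add]
      have h3 : (1/2 : ℝ) ^ (L + 15) = (1/2) ^ (L + 1) * (1/2) ^ 14 := by rw [← pow_add]
      rw [h2] at h1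
      rw [h3]
      norm_num at h1 hL1 ⊢
      linarith)
  refine ⟨Γ2 ∪ univ.image l, ?_, ?_⟩
  · refine (card_union_le _ _).trans (add_le_add hd2 ?_)
    refine card_image_le.trans ?_
    simpa using hr
  intro w hw hws
  obtain ⟨x', hx'⟩ := hl w hw fun z hz => by
    have hz' := mem_bohr.mp (hws z hz)
    have z1 : z ∈ bohr Γ2 ((1/2) ^ s5) := by
      rw [mem_bohr]; intro γ hγ
      exact (hz' γ (mem_union_left _ hγ)).trans (hpow _ _ (by omega))
    refine ⟨z1, neg_mem_bohr z1, fun i => ?_⟩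
    exact (hz' (l i) (mem_union_right _ (mem_image_of_mem _ (mem_univ i)))).trans (hpow _ _ (by omega))
  refine ⟨x + x', ?_⟩
  have hw0 : 0 ≤ ∑ z, w z := sum_nonneg fun z _ => hw z
  calc 1.001 * a * ∑ z, w z ≤ 1.005 * α1 * ∑ z, w z := by
        refine mul_le_mul_of_nonneg_right ?_ hw0; linarith
    _ ≤ _ := hx'
    _ ≤ _ := by
        refine sum_le_sum fun z _ => mul_le_mul_of_nonneg_left ?_ (hw z)
        unfold ind
        split_ifs with i1 i2
        · exact le_rfl
        · exact absurd (by rw [add_assoc]; exact (mem_filter.mp i1).2) i2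
        · norm_num
        · exact le_rfl

end KM

set_option linter.unusedSectionVars false
namespace KM
open scoped Classical
open Finset
variable {G : Type} [AddCommGroup G] [Fintype G]

lemma HD_start (A : Finset G) (a : ℝ) (ha : a * Fintype.card G ≤ A.card) : HD A ∅ 0 a := by
  intro w hw _
  by_contra hcon
  push Not at hcon
  have h1 : ∑ x : G, ∑ z, w z * ind A (x + z) = A.card * ∑ z, w z := by
    rw [sum_comm, mul_sum]
    refine sum_congr rfl fun z _ => ?_
    rw [← mul_sum, Fintype.sum_equiv (Equiv.addRight z) (fun x => ind A (x + z)) (ind A) (fun x => rfl),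
      sum_ind, mul_comm]
  have h2 : ∑ x : G, ∑ z, w z * ind A (x + z) < ∑ x : G, a * ∑ z, w z :=
    sum_lt_sum_of_nonempty ⟨0, mem_univ _⟩ fun x _ => hcon x
  rw [h1, sum_const, card_univ, nsmul_eq_mul] at h2
  have hw0 : 0 ≤ ∑ z, w z := sum_nonneg fun z _ => hw z
  nlinarith

lemma HD_le_one (A : Finset G) (Γ) (s : ℕ) (a : ℝ) (h : HD A Γ s a) : a ≤ 1 := by
  obtain ⟨x, hx⟩ := h (ind {0}) (fun z => ind_nonneg _ _) (fun z hz => by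
    have : z = 0 := by
      by_contra hne
      apply hz; simp [ind, hne]
    rw [this]; exact zero_mem_bohr _ (by positivity))
  rw [sum_ind, sum_ind_mul] at hx
  rw [sum_singleton, card_singleton, Nat.cast_one, mul_one] at hx
  refine hx.trans ?_
  unfold ind
  split_ifs <;> norm_num

lemma iterate (hodd : Odd (Fintype.card G)) (A : Finset G) (L q J : ℕ) (a : ℝ)
    (h1 : J * RR (L + 12) ≤ 2 ^ q) (h2 : J * (13 * q + 4 * L + 62) + 4 ≤ 2 ^ q)
    (hRq : RR (L + 12) ≤ 2 ^ q) (hPq : 2 * (L + 12) ≤ 2 ^ q)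
    (ha : (1/2 : ℝ) ^ L ≤ a) (hA : a * Fintype.card G ≤ A.card)
    (hno : T3 A < (1/2 : ℝ) ^ (3 * L + 4) * ((Fintype.card G : ℝ) *
      (1/4) ^ (J * RR (L + 12) * (J * (13 * q + 4 * L + 62) + 3))) ^ 2) :
    ∀ j ≤ J, ∃ Γ : Finset (AddChar G ℂ), Γ.card ≤ j * RR (L + 12) ∧
      HD A Γ (j * (13 * q + 4 * L + 62)) (1.001 ^ j * a) := by
  intro j
  induction j with
  | zero => intro _; exact ⟨∅, by simp, by simpa using HD_start A a hA⟩
  | succ j ih =>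
    intro hj
    obtain ⟨Γ, hΓ, hHD⟩ := ih (by omega)
    have e1 : (j + 1) * RR (L + 12) ≤ J * RR (L + 12) := Nat.mul_le_mul_right _ hj
    have e2 : (j + 1) * (13 * q + 4 * L + 62) ≤ J * (13 * q + 4 * L + 62) :=
      Nat.mul_le_mul_right _ hj
    have f1 : (j + 1) * RR (L + 12) = j * RR (L + 12) + RR (L + 12) := Nat.succ_mul _ _
    have f2 : (j + 1) * (13 * q + 4 * L + 62) = j * (13 * q + 4 * L + 62) + (13 * q + 4 * L + 62) :=
      Nat.succ_mul _ _
    have ha0 : 0 < a := lt_of_lt_of_le (by positivity) ha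
    have ha' : (1/2 : ℝ) ^ L ≤ 1.001 ^ j * a := by
      have : (1 : ℝ) ≤ 1.001 ^ j := one_le_pow₀ (by norm_num)
      nlinarith
    rcases step hodd A Γ L (j * RR (L + 12)) (j * (13 * q + 4 * L + 62)) q (1.001 ^ j * a) hΓ
      (by omega) (by omega) hRq hPq ha' hHD with ⟨Γ', hc, hH⟩ | hT
    · refine ⟨Γ', by omega, ?_⟩
      rw [f2, pow_succ, mul_comm ((1.001 : ℝ) ^ j), mul_assoc]
      convert hH using 1
      omega
    · exfalso
      refine absurd (lt_of_le_of_lt hT hno) (not_lt.mpr ?_)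
      have : (1/4 : ℝ) ^ (J * RR (L + 12) * (J * (13 * q + 4 * L + 62) + 3)) ≤
          (1/4) ^ (j * RR (L + 12) * (j * (13 * q + 4 * L + 62) + 13 * q + 4 * L + 65)) := by
        apply pow_le_pow_of_le_one (by norm_num) (by norm_num)
        apply Nat.mul_le_mul <;> omega
      gcongr

lemma RR_le (P : ℕ) (hP : 1 ≤ P) : RR P ≤ 2 ^ 42 * P ^ 6 := by
  have h1 : P ≤ P ^ 2 := by nlinarith
  have h2 : 1 ≤ P ^ 2 := Nat.one_le_pow _ _ hP
  have h3 : nn P ≤ 64000000 * P ^ 2 * (86 * P ^ 2) := by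
    unfold nn; apply Nat.mul_le_mul_left; omega
  have h4 : 3 + 68 * P ^ 2 ≤ 71 * P ^ 2 := by omega
  have h5 := Nat.mul_le_mul h4 h3
  have h6 : 1 ≤ P ^ 6 := Nat.one_le_pow _ _ hP
  have h7 : 71 * P ^ 2 * (64000000 * P ^ 2 * (86 * P ^ 2)) = 390784000000 * P ^ 6 := by ring
  unfold RR; omega

lemma pow_big : ∃ m : ℕ, m = 1000 ∧ (2 : ℝ) ≤ 1.001 ^ m := by
  have h := fun m : ℕ => one_add_mul_le_pow (show (-2 : ℝ) ≤ 0.001 by norm_num) m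
  obtain ⟨m, hm⟩ : ∃ m : ℕ, m = 1000 := ⟨_, rfl⟩
  refine ⟨m, hm, ?_⟩
  have h1 := h m
  have h2 : (m : ℝ) = 1000 := by rw [hm]; norm_num
  rw [h2] at h1
  rw [show (1 : ℝ) + 0.001 = 1.001 by norm_num] at h1
  refine le_trans ?_ h1
  norm_num

lemma big_one (L : ℕ) : (1 : ℝ) < 1.001 ^ (1000 * L + 1) * (1/2) ^ L := by
  obtain ⟨m, hm, hbig⟩ := pow_big
  rw [← hm, pow_succ, pow_mul]
  generalize (1.001 : ℝ) ^ m = z at hbig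
  have h2 : (2 : ℝ) ^ L ≤ z ^ L := pow_le_pow_left₀ (by norm_num) hbig L
  have h3 : (2 : ℝ) ^ L * (1/2) ^ L = 1 := by rw [← mul_pow]; norm_num
  have h4 : (0 : ℝ) < (1/2) ^ L := by positivity
  generalize z ^ L = u at *
  generalize (2 : ℝ) ^ L = v at *
  generalize (1/2 : ℝ) ^ L = w at *
  nlinarith

lemma quarter (N : ℝ) (L X Y : ℕ) (hXY : 3 * L + 4 + 4 * X ≤ Y) :
    (1/2 : ℝ) ^ Y * N ^ 2 ≤ (1/2) ^ (3 * L + 4) * (N * (1/4) ^ X) ^ 2 := by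
  have hp : (1/4 : ℝ) ^ X = (1/2) ^ (2 * X) := by rw [pow_mul]; norm_num
  rw [hp, mul_pow, ← pow_mul, mul_comm (N ^ 2), ← mul_assoc, ← pow_add]
  refine mul_le_mul_of_nonneg_right ?_ (by positivity)
  apply pow_le_pow_of_le_one (by norm_num) (by norm_num)
  omega

lemma num_bd (P L a b : ℕ) (hL : P = L + 12) (ha : a ≤ 2 ^ 52 * P ^ 7) (hb : b + 4 ≤ 2 ^ 20 * P ^ 2) :
    3 * L + 4 + 4 * (a * (b + 3)) ≤ 2 ^ 90 * P ^ 9 := by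
  have h1 : a * (b + 3) ≤ 2 ^ 72 * P ^ 9 := by
    calc a * (b + 3) ≤ 2 ^ 52 * P ^ 7 * (2 ^ 20 * P ^ 2) := Nat.mul_le_mul ha (by omega)
      _ = _ := by ring
  have h2 : P ≤ P ^ 9 := Nat.le_self_pow (by norm_num) _
  omega

lemma mainT (hodd : Odd (Fintype.card G)) (A : Finset G) (L : ℕ)
    (hA : (1/2 : ℝ) ^ L * Fintype.card G ≤ A.card) :
    (1/2 : ℝ) ^ (2 ^ 90 * (L + 12) ^ 9) * (Fintype.card G : ℝ) ^ 2 ≤ T3 A := by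
  obtain ⟨P, hP⟩ : ∃ P, P = L + 12 := ⟨_, rfl⟩
  have hP12 : 12 ≤ P := by omega
  have hR := RR_le P (by omega)
  have hp2 : P ≤ 2 ^ P := Nat.lt_two_pow_self.le
  have hJ : 1000 * L + 1 ≤ 1000 * P := by omega
  have hK : 13 * (60 * P) + 4 * L + 62 ≤ 1000 * P := by omega
  have hJR : (1000 * L + 1) * RR P ≤ 2 ^ 52 * P ^ 7 :=
    (Nat.mul_le_mul hJ hR).trans (by
      rw [show 1000 * P * (2 ^ 42 * P ^ 6) = (1000 * 2 ^ 42) * P ^ 7 by ring]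
      exact Nat.mul_le_mul_right _ (by norm_num))
  have hJK : (1000 * L + 1) * (13 * (60 * P) + 4 * L + 62) + 4 ≤ 2 ^ 20 * P ^ 2 := by
    have h := Nat.mul_le_mul hJ hK
    have h2 : 1000 * P * (1000 * P) = 1000000 * P ^ 2 := by ring
    have h3 : 1 ≤ P ^ 2 := Nat.one_le_pow _ _ (by omega)
    omega
  have hb7 : 2 ^ 52 * P ^ 7 ≤ 2 ^ (60 * P) := by
    calc 2 ^ 52 * P ^ 7 ≤ 2 ^ 52 * (2 ^ P) ^ 7 := by gcongr
      _ = 2 ^ (52 + P * 7) := by rw [← pow_mul, ← pow_add]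
      _ ≤ _ := Nat.pow_le_pow_right (by norm_num) (by omega)
  have hb2 : 2 ^ 20 * P ^ 2 ≤ 2 ^ (60 * P) := by
    calc 2 ^ 20 * P ^ 2 ≤ 2 ^ 20 * (2 ^ P) ^ 2 := by gcongr
      _ = 2 ^ (20 + P * 2) := by rw [← pow_mul, ← pow_add]
      _ ≤ _ := Nat.pow_le_pow_right (by norm_num) (by omega)
  have hPP : 2 * P ≤ 2 ^ 20 * P ^ 2 := by
    have : P ≤ P ^ 2 := Nat.le_self_pow (by norm_num) _
    omega
  by_contra hcon
  rw [not_le] at hcon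
  subst hP
  have key := iterate hodd A L (60 * (L + 12)) (1000 * L + 1) ((1/2) ^ L) (hJR.trans hb7) (hJK.trans hb2)
    ((Nat.le_mul_of_pos_left _ (by omega)).trans (hJR.trans hb7))
    (hPP.trans hb2) le_rfl hA (lt_of_lt_of_le hcon (quarter _ _ _ _ (num_bd _ _ _ _ rfl hJR hJK)))
  obtain ⟨Γ, _, hH⟩ := key _ le_rfl
  have hle := HD_le_one _ _ _ _ hH
  exact absurd hle (not_le.mpr (big_one L))

lemma final (hodd : Odd (Fintype.card G)) (A : Finset G) (hne : A.Nonempty) (α : ℝ)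
    (hα : α = (A.card : ℝ) / Fintype.card G) :
    Real.exp (-((2 ^ 90 * 36 ^ 9 * Real.exp (7/2)) * α ^ (-1 + 1/2 : ℝ))) ≤
      T3 A / (Fintype.card G : ℝ) ^ 2 := by
  have hN : 0 < (Fintype.card G : ℝ) := by exact_mod_cast Fintype.card_pos
  have hA0 : 0 < (A.card : ℝ) := by exact_mod_cast hne.card_pos
  have hα0 : 0 < α := by rw [hα]; positivity
  have hα1 : α ≤ 1 := by
    rw [hα, div_le_one hN]; exact_mod_cast card_le_univ A
  obtain ⟨y, hy⟩ : ∃ y, y = -Real.log α := ⟨_, rfl⟩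
  have hαy : α = Real.exp (-y) := by rw [hy, neg_neg, Real.exp_log hα0]
  have hy0 : 0 ≤ y := by rw [hy]; linarith [Real.log_nonpos hα0.le hα1]
  set L := ⌈2 * y⌉₊ with hL
  have hL1 : 2 * y ≤ L := Nat.le_ceil _
  have hL2 : (L : ℝ) < 2 * y + 1 := Nat.ceil_lt_add_one (by linarith)
  have hhalf : ∀ n : ℕ, (1/2 : ℝ) ^ n = Real.exp (-(n * Real.log 2)) := by
    intro n
    rw [Real.exp_neg, mul_comm, Real.exp_mul, Real.exp_log (by norm_num), Real.rpow_natCast]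
    simp
  have l2 := Real.log_two_gt_d9
  have l2' := Real.log_two_lt_d9
  have h1 : (1/2 : ℝ) ^ L * Fintype.card G ≤ A.card := by
    have : (A.card : ℝ) = α * Fintype.card G := by
      rw [hα, div_mul_cancel₀ _ hN.ne']
    rw [this]
    refine mul_le_mul_of_nonneg_right ?_ hN.le
    rw [hhalf, hαy]
    apply Real.exp_le_exp.mpr
    nlinarith
  have h2 := mainT hodd A L h1
  rw [le_div_iff₀ (by positivity)]
  refine le_trans (mul_le_mul_of_nonneg_right ?_ (by positivity)) h2
  rw [hhalf]
  apply Real.exp_le_exp.mpr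
  apply neg_le_neg
  have hpow : α ^ (-1 + 1/2 : ℝ) = Real.exp (y / 2) := by
    rw [hαy, ← Real.exp_mul]; congr 1; ring
  rw [hpow]
  set u := (y + 7) / 18 with hu
  have hu0 : 0 ≤ u := by positivity
  have hue : u ≤ Real.exp u := by linarith [Real.add_one_le_exp u]
  have h9 : u ^ 9 ≤ Real.exp (7/2) * Real.exp (y/2) := by
    calc u ^ 9 ≤ Real.exp u ^ 9 := pow_le_pow_left₀ hu0 hue 9
      _ = _ := by
        rw [← Real.exp_nat_mul, ← Real.exp_add]; congr 1; rw [hu]; push_cast; ring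
  have hP : ((L : ℝ) + 12) ^ 9 ≤ 36 ^ 9 * u ^ 9 := by
    rw [← mul_pow]
    refine pow_le_pow_left₀ (by positivity) ?_ 9
    rw [hu]; linarith
  rw [Nat.cast_mul, Nat.cast_pow, Nat.cast_pow, Nat.cast_add, Nat.cast_ofNat, Nat.cast_ofNat]
  have hZ : (0:ℝ) ≤ 2 ^ 90 * ((L : ℝ) + 12) ^ 9 := by positivity
  calc 2 ^ 90 * ((L : ℝ) + 12) ^ 9 * Real.log 2 ≤ 2 ^ 90 * ((L : ℝ) + 12) ^ 9 * 1 :=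
        mul_le_mul_of_nonneg_left (by linarith) hZ
    _ ≤ 2 ^ 90 * (36 ^ 9 * (Real.exp (7/2) * Real.exp (y/2))) := by
        rw [mul_one]
        refine mul_le_mul_of_nonneg_left (hP.trans ?_) (by positivity)
        exact mul_le_mul_of_nonneg_left h9 (by positivity)
    _ = 2 ^ 90 * 36 ^ 9 * Real.exp (7/2) * Real.exp (y/2) := by ring

end KM

open scoped Classical in
/-- **Theorem 2 (Bloom–Sisask).** There are absolute constants `c ∈ (0,1)` and `C > 0`
such that for every finite abelian group `G` of odd order and every nonempty `A ⊆ G`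
of density `α = |A|/|G|`, the normalized count of three-term arithmetic progressions
`T(A) = 𝔼_{x,d} 1_A(x) 1_A(x+d) 1_A(x+2d)` satisfies `T(A) ≥ exp(−C·α^{−1+c})`. -/
theorem count_threeAPs_lower_bound :
    ∃ c C : ℝ, c ∈ Set.Ioo (0 : ℝ) 1 ∧ 0 < C ∧
      ∀ (G : Type) [AddCommGroup G] [Fintype G], Odd (Fintype.card G) →
        ∀ A : Finset G, A.Nonempty →
          ∀ α : ℝ, α = (A.card : ℝ) / Fintype.card G →
            Real.exp (-(C * α ^ (-1 + c))) ≤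
              (∑ x : G, ∑ d : G,
                  (if x ∈ A then (1 : ℝ) else 0) * (if x + d ∈ A then (1 : ℝ) else 0) *
                    (if x + d + d ∈ A then (1 : ℝ) else 0)) / (Fintype.card G : ℝ) ^ 2 := by
  refine ⟨1/2, 2 ^ 90 * 36 ^ 9 * Real.exp (7/2), by constructor <;> norm_num, by positivity, ?_⟩
  intro G _ _ hodd A hne α hα
  exact KM.final hodd A hne α hα
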